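/- arXiv:1304.6605 — 2 statements merged into one kernel-verified Lean document; each statement's English description precedes it below -/
import Mathlib

section
/- Let g : 𝔻 → ℂ be holomorphic of the form g(ζ) = g(0) − conj(g(0))·ζ² − ζ·q(ζ) with Re q ≥ 0 on 𝔻, and write g(ζ) = Σ_{j≥0} c_j ζ^j. Then |c_2| ≤ |c_0| + 2·(−Re c_1) and |c_j| ≤ 2·(−Re c_1) for all j ≥ 3. In particular Re c_1 ≤ 0. -/
open Complex Metric

/-! Matching coefficients in `g(ζ) = g(0) - conj(g(0)) ζ² - ζ q(ζ)` gives `c₁ = -q(0)`,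
`c₂ = -conj(c₀) - a₁` and `cⱼ = -aⱼ₋₁` for `j ≥ 3`, where `aₙ` are the Taylor coefficients of `q`.
Everything thus reduces to Carathéodory's inequality `|aₙ| ≤ 2 Re q(0)` for `n ≥ 1`. On a circle of
radius `r < 1` the mean of `z⁻ⁿ q(z)` is `aₙ`, while that of `z⁻ⁿ conj(q(z))` is `0`, being
`r⁻²ⁿ` times the conjugate of the mean of `zⁿ q(z)`. Hence `aₙ` is the mean of `2 z⁻ⁿ Re q(z)`,
and since `Re q ≥ 0`, its modulus is at most `2 r⁻ⁿ` times the mean of `Re q`, which is `Re q(0)`.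
Finally let `r → 1`. -/

open Filter Topology
open scoped Nat ComplexConjugate

section TaylorCoeff

variable {𝕜 E : Type*} [NontriviallyNormedField 𝕜] [NormedAddCommGroup E] [NormedSpace 𝕜 E]

/-- The `n`-th Taylor coefficient of `f` at `x`, namely `f⁽ⁿ⁾(x) / n!`, for a function of one
variable with values in a normed space. It is `0` if `n!` vanishes in `𝕜`. -/
noncomputable def taylorCoeff (f : 𝕜 → E) (x : 𝕜) (n : ℕ) : E :=
  (n ! : 𝕜)⁻¹ • iteratedDeriv n f x

theorem taylorCoeff_eq_div (f : 𝕜 → 𝕜) (x : 𝕜) (n : ℕ) :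
    taylorCoeff f x n = iteratedDeriv n f x / n ! :=
  inv_mul_eq_div _ _

@[simp]
theorem taylorCoeff_zero (f : 𝕜 → E) (x : 𝕜) : taylorCoeff f x 0 = f x := by
  simp [taylorCoeff]

theorem taylorCoeff_congr {f g : 𝕜 → E} {x : 𝕜} (h : f =ᶠ[𝓝 x] g) (n : ℕ) :
    taylorCoeff f x n = taylorCoeff g x n := by
  rw [taylorCoeff, taylorCoeff, h.iteratedDeriv_eq]

theorem taylorCoeff_fun_sub {f g : 𝕜 → E} {x : 𝕜} {n : ℕ} (hf : ContDiffAt 𝕜 n f x)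
    (hg : ContDiffAt 𝕜 n g x) :
    taylorCoeff (fun z ↦ f z - g z) x n = taylorCoeff f x n - taylorCoeff g x n := by
  simp only [taylorCoeff, iteratedDeriv_fun_sub hf hg, smul_sub]

theorem taylorCoeff_const_succ (a : E) (x : 𝕜) (n : ℕ) :
    taylorCoeff (fun _ ↦ a) x (n + 1) = 0 := by
  simp [taylorCoeff, iteratedDeriv_const]

theorem taylorCoeff_const_mul (a : 𝕜) (f : 𝕜 → 𝕜) (x : 𝕜) (n : ℕ) :
    taylorCoeff (fun z ↦ a * f z) x n = a * taylorCoeff f x n := by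
  simp only [taylorCoeff_eq_div, iteratedDeriv_const_mul_field, mul_div_assoc]

variable [CharZero 𝕜]

theorem taylorCoeff_fun_pow_zero (m n : ℕ) :
    taylorCoeff (fun z : 𝕜 ↦ z ^ m) 0 n = if n = m then 1 else 0 := by
  rw [taylorCoeff_eq_div, iteratedDeriv_fun_pow_zero]
  split_ifs with h
  · rw [h, div_self (Nat.cast_ne_zero.2 m.factorial_ne_zero)]
  · rw [Nat.cast_zero, zero_div]

theorem taylorCoeff_sub_mul_succ {f : 𝕜 → 𝕜} {x : 𝕜} {n : ℕ}
    (hf : ContDiffAt 𝕜 (n + 1 : ℕ) f x) :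
    taylorCoeff (fun z ↦ (z - x) * f z) x (n + 1) = taylorCoeff f x n := by
  have hid (i : ℕ) : iteratedDeriv i (fun z ↦ z - x) x = if i = 1 then 1 else 0 := by
    rw [iteratedDeriv_comp_sub_const i (fun z ↦ z) x]
    simp only [sub_self, iteratedDeriv_fun_id_zero]
  have hderiv : iteratedDeriv (n + 1) (fun z ↦ (z - x) * f z) x =
      (n + 1) * iteratedDeriv n f x := by
    rw [iteratedDeriv_fun_mul (by fun_prop) hf, Finset.sum_eq_single 1]
    · simp [hid]
    · intro i _ hi
      simp [hid, hi]
    · simp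
  rw [taylorCoeff_eq_div, taylorCoeff_eq_div, hderiv, Nat.factorial_succ, Nat.cast_mul,
    Nat.cast_succ, mul_div_mul_left _ _ n.cast_add_one_ne_zero]

theorem taylorCoeff_succ_of_eventuallyEq_sub_sq_sub_mul {g q : 𝕜 → 𝕜} {a b : 𝕜} {n : ℕ}
    (hq : ContDiffAt 𝕜 (n + 1 : ℕ) q 0) (hg : g =ᶠ[𝓝 0] fun z ↦ a - b * z ^ 2 - z * q z) :
    taylorCoeff g 0 (n + 1) = -(if n = 1 then b else 0) - taylorCoeff q 0 n := by
  have hmul : taylorCoeff (fun z ↦ z * q z) 0 (n + 1) = taylorCoeff q 0 n := by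
    simpa only [sub_zero] using taylorCoeff_sub_mul_succ hq
  rw [taylorCoeff_congr hg, taylorCoeff_fun_sub (by fun_prop) (by fun_prop),
    taylorCoeff_fun_sub (by fun_prop) (by fun_prop), taylorCoeff_const_succ,
    taylorCoeff_const_mul, taylorCoeff_fun_pow_zero, hmul]
  simp

end TaylorCoeff

section CircleAverage

theorem norm_circleAverage_le_circleAverage_norm {E : Type*} [NormedAddCommGroup E]
    [NormedSpace ℝ E] {f : ℂ → E} {c : ℂ} {R : ℝ} :
    ‖Real.circleAverage f c R‖ ≤ Real.circleAverage (fun z ↦ ‖f z‖) c R := by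
  have h2pi : 0 ≤ 2 * Real.pi := Real.two_pi_pos.le
  rw [Real.circleAverage_def, Real.circleAverage_def, norm_smul, smul_eq_mul,
    Real.norm_of_nonneg (inv_nonneg.2 h2pi)]
  gcongr
  exact intervalIntegral.norm_integral_le_integral_norm h2pi

variable {E : Type*} [NormedAddCommGroup E] [NormedSpace ℂ E] [CompleteSpace E] {c : ℂ} {R : ℝ}
  {n : ℕ}

theorem circleAverage_inv_pow_smul {f : ℂ → E} (hR : 0 < R) (hf : DiffContOnCl ℂ f (ball c R))
    (n : ℕ) :
    Real.circleAverage (fun z ↦ ((z - c) ^ n)⁻¹ • f z) c R = taylorCoeff f c n := by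
  have hkernel : (fun z ↦ (z - c)⁻¹ • ((z - c) ^ n)⁻¹ • f z) =
      fun z ↦ (1 / (z - c) ^ (n + 1)) • f z := by
    funext z
    rw [smul_smul, ← mul_inv, ← pow_succ', one_div]
  rw [Real.circleAverage_eq_circleIntegral hR.ne', hkernel,
    hf.circleIntegral_one_div_sub_center_pow_smul hR n, smul_smul, mul_div_assoc',
    inv_mul_cancel₀ two_pi_I_ne_zero, one_div, taylorCoeff]

theorem circleAverage_pow_smul_eq_zero {f : ℂ → E} (hf : DiffContOnCl ℂ f (ball c |R|))
    (hn : n ≠ 0) : Real.circleAverage (fun z ↦ (z - c) ^ n • f z) c R = 0 := by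
  have hpow : Differentiable ℂ fun z ↦ (z - c) ^ n := by fun_prop
  simpa [hn] using (hpow.diffContOnCl.smul hf).circleAverage

variable {f : ℂ → ℂ}

theorem circleIntegrable_inv_pow_mul (hR : 0 < R) (hf : ContinuousOn f (sphere c R)) (n : ℕ) :
    CircleIntegrable (fun z ↦ ((z - c) ^ n)⁻¹ * f z) c R := by
  have hne : ∀ z ∈ sphere c R, (z - c) ^ n ≠ 0 := fun z hz ↦
    pow_ne_zero n (sub_ne_zero.2 (ne_of_mem_sphere hz hR.ne'))
  have hpow : ContinuousOn (fun z ↦ (z - c) ^ n) (sphere c R) := by fun_prop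
  exact ((hpow.inv₀ hne).mul hf).circleIntegrable hR.le

theorem inv_sub_pow_eq_mul_conj_of_mem_sphere {z : ℂ} (hz : z ∈ sphere c R) (n : ℕ) :
    ((z - c) ^ n)⁻¹ = ((R : ℂ) ^ (2 * n))⁻¹ * conj ((z - c) ^ n) := by
  rw [inv_def, normSq_eq_norm_sq, norm_pow, mem_sphere_iff_norm.1 hz]
  push_cast
  ring

theorem circleAverage_inv_pow_mul_conj_eq_zero (hR : 0 < R)
    (hf : DiffContOnCl ℂ f (ball c R)) (hn : n ≠ 0) :
    Real.circleAverage (fun z ↦ ((z - c) ^ n)⁻¹ * conj (f z)) c R = 0 := by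
  have hcont : ContinuousOn f (sphere c R) := hf.continuousOn_ball.mono sphere_subset_closedBall
  have hint : CircleIntegrable (fun z ↦ (z - c) ^ n • f z) c R :=
    ContinuousOn.circleIntegrable hR.le (by fun_prop)
  calc Real.circleAverage (fun z ↦ ((z - c) ^ n)⁻¹ * conj (f z)) c R
      = Real.circleAverage
          (fun z ↦ ((R : ℂ) ^ (2 * n))⁻¹ • conj ((z - c) ^ n • f z)) c R := by
        refine Real.circleAverage_congr_sphere fun z hz ↦ ?_
        rw [abs_of_pos hR] at hz
        simp only [inv_sub_pow_eq_mul_conj_of_mem_sphere hz, smul_eq_mul, map_mul, mul_assoc]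
    _ = ((R : ℂ) ^ (2 * n))⁻¹ •
          conj (Real.circleAverage (fun z ↦ (z - c) ^ n • f z) c R) := by
        rw [Real.circleAverage_fun_smul]
        exact congrArg _ ((conjCLE : ℂ →L[ℝ] ℂ).circleAverage_comp_comm hint)
    _ = 0 := by
        rw [circleAverage_pow_smul_eq_zero (by rwa [abs_of_pos hR]) hn, map_zero, smul_zero]

theorem circleAverage_inv_pow_mul_two_mul_re (hR : 0 < R) (hf : DiffContOnCl ℂ f (ball c R))
    (hn : n ≠ 0) :
    Real.circleAverage (fun z ↦ ((z - c) ^ n)⁻¹ * (2 * (f z).re : ℝ)) c R =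
      taylorCoeff f c n := by
  have hcont : ContinuousOn f (sphere c R) := hf.continuousOn_ball.mono sphere_subset_closedBall
  have hcont_conj : ContinuousOn (fun z ↦ conj (f z)) (sphere c R) :=
    continuous_conj.comp_continuousOn hcont
  simp only [← add_conj, mul_add]
  rw [Real.circleAverage_fun_add (circleIntegrable_inv_pow_mul hR hcont n)
      (circleIntegrable_inv_pow_mul hR hcont_conj n),
    circleAverage_inv_pow_mul_conj_eq_zero hR hf hn, add_zero]
  exact circleAverage_inv_pow_smul hR hf n

theorem circleAverage_re (hf : DiffContOnCl ℂ f (ball c |R|)) :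
    Real.circleAverage (fun z ↦ (f z).re) c R = (f c).re := by
  by_cases hR : R = 0
  · simp [hR]
  have hint : CircleIntegrable f c R := by
    refine ContinuousOn.circleIntegrable' (hf.continuousOn.mono ?_)
    rw [closure_ball c (abs_ne_zero.2 hR)]
    exact sphere_subset_closedBall
  rw [← hf.circleAverage]
  exact reCLM.circleAverage_comp_comm hint

end CircleAverage

section Caratheodory

variable {f : ℂ → ℂ} {c : ℂ} {R : ℝ} {n : ℕ}

theorem norm_taylorCoeff_mul_pow_le_of_re_nonneg_on_sphere (hR : 0 < R)
    (hf : DiffContOnCl ℂ f (ball c R)) (hre : ∀ z ∈ sphere c R, 0 ≤ (f z).re) (hn : n ≠ 0) :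
    ‖taylorCoeff f c n‖ * R ^ n ≤ 2 * (f c).re := by
  rw [← le_div_iff₀ (pow_pos hR n)]
  calc ‖taylorCoeff f c n‖
      ≤ Real.circleAverage (fun z ↦ ‖((z - c) ^ n)⁻¹ * (2 * (f z).re : ℝ)‖) c R := by
        rw [← circleAverage_inv_pow_mul_two_mul_re hR hf hn]
        exact norm_circleAverage_le_circleAverage_norm
    _ = Real.circleAverage (fun z ↦ (2 / R ^ n) • (f z).re) c R := by
        refine Real.circleAverage_congr_sphere fun z hz ↦ ?_
        rw [abs_of_pos hR] at hz
        have hpos : 0 ≤ 2 * (f z).re := mul_nonneg zero_le_two (hre z hz)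
        simp only [norm_mul, norm_inv, norm_pow, norm_real, mem_sphere_iff_norm.1 hz,
          Real.norm_of_nonneg hpos, smul_eq_mul]
        ring
    _ = 2 * (f c).re / R ^ n := by
        rw [Real.circleAverage_fun_smul, circleAverage_re (by rwa [abs_of_pos hR]), smul_eq_mul,
          div_mul_eq_mul_div]

theorem norm_taylorCoeff_mul_pow_le_of_re_nonneg (hR : 0 < R)
    (hf : DifferentiableOn ℂ f (ball c R)) (hre : ∀ z ∈ ball c R, 0 ≤ (f z).re) (hn : n ≠ 0) :
    ‖taylorCoeff f c n‖ * R ^ n ≤ 2 * (f c).re := by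
  have hlim : Tendsto (fun r : ℝ ↦ ‖taylorCoeff f c n‖ * r ^ n) (𝓝[<] R)
      (𝓝 (‖taylorCoeff f c n‖ * R ^ n)) :=
    (Continuous.tendsto (by fun_prop) R).mono_left nhdsWithin_le_nhds
  refine le_of_tendsto hlim ?_
  filter_upwards [Ioo_mem_nhdsLT hR] with r hr
  have hsub : closedBall c r ⊆ ball c R := closedBall_subset_ball hr.2
  exact norm_taylorCoeff_mul_pow_le_of_re_nonneg_on_sphere hr.1 (hf.diffContOnCl_ball hsub)
    (fun z hz ↦ hre z (hsub (sphere_subset_closedBall hz))) hn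

end Caratheodory

theorem stmt2 (g q : ℂ → ℂ)
    (hg : DifferentiableOn ℂ g (ball 0 1))
    (hq : DifferentiableOn ℂ q (ball 0 1))
    (hrep : ∀ ζ ∈ ball (0:ℂ) 1, g ζ = g 0 - (starRingEnd ℂ) (g 0) * ζ ^ 2 - ζ * q ζ)
    (hre : ∀ ζ ∈ ball (0:ℂ) 1, 0 ≤ (q ζ).re)
    (c : ℕ → ℂ)
    (hc : ∀ j, c j = iteratedDeriv j g 0 / (Nat.factorial j)) :
    ‖c 2‖ ≤ ‖c 0‖ + 2 * (-(c 1).re) ∧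
    (∀ j, 3 ≤ j → ‖c j‖ ≤ 2 * (-(c 1).re)) ∧
    (c 1).re ≤ 0 := by
  have hball : ball (0 : ℂ) 1 ∈ 𝓝 0 := ball_mem_nhds 0 one_pos
  have hcoeff (n : ℕ) : c (n + 1) = -(if n = 1 then conj (g 0) else 0) - taylorCoeff q 0 n := by
    rw [hc, ← taylorCoeff_eq_div]
    exact taylorCoeff_succ_of_eventuallyEq_sub_sq_sub_mul (hq.analyticAt hball).contDiffAt
      (eventually_of_mem hball hrep)
  have hbound {n : ℕ} (hn : n ≠ 0) : ‖taylorCoeff q 0 n‖ ≤ 2 * (q 0).re := by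
    simpa using norm_taylorCoeff_mul_pow_le_of_re_nonneg one_pos hq hre hn
  have hc0 : c 0 = g 0 := by simp [hc]
  have hc1 : -(c 1).re = (q 0).re := by simp [hcoeff 0]
  rw [← neg_nonneg, hc1]
  refine ⟨?_, fun j hj ↦ ?_, hre 0 (mem_ball_self one_pos)⟩
  · calc ‖c 2‖ = ‖-conj (g 0) - taylorCoeff q 0 1‖ := by rw [hcoeff 1, if_pos rfl]
      _ ≤ ‖-conj (g 0)‖ + ‖taylorCoeff q 0 1‖ := norm_sub_le _ _
      _ ≤ ‖c 0‖ + 2 * (q 0).re := by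
        rw [norm_neg, norm_conj, hc0]
        gcongr
        exact hbound one_ne_zero
  · obtain ⟨n, rfl⟩ : ∃ n, j = n + 1 := ⟨j - 1, by omega⟩
    rw [hcoeff, if_neg (by omega), neg_zero, zero_sub, norm_neg]
    exact hbound (by omega)
end

section
/- Let D ⊂ ℂⁿ be a bounded balanced convex domain and let (G_n) be a sequence of infinitesimal generators on D such that ‖G_n(0)‖ + ‖DG_n(0)‖ ≤ C for all n and some constant C > 0. Then there is a subsequence of (G_n) converging uniformly on compact subsets of D to a holomorphic map G : D → ℂⁿ which is again an infinitesimal generator on D. -/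
open Complex Metric

/-!
Write `Φ_t` for the semiflow of a generator `G` on a bounded domain `D`. Each `Φ_t` is a holomorphic
self-map of `D`, so Cauchy's estimates bound its derivatives near a point `p` uniformly in `t`.
Since `d/dt Φ_t(z) = DΦ_t(z) G(z)`, the 1-jet of `G` at `p` controls `DΦ_t(p) - id` for small `t`,
hence also `DΦ_t(z) - id` on a ball around `p` whose radius depends on `D` and `p` only. There
`Φ_t(z) - z` is comparable to `t G(z)` for a definite time, and it is bounded by the diameter of
`D`; this bounds `G` on the ball. By connectedness the bounds propagate to all of `D`, and Montel's
theorem gives a convergent subsequence.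

The limit is again a generator as soon as the trajectories starting at a given point stay, up to any
finite time, in a fixed compact subset of the convex domain `D`. This follows from Harnack's
inequality in the half-planes supporting `D`: a holomorphic map into `D` cannot bring a point much
closer to the boundary than its neighbours.
-/

open Set Filter Topology Asymptotics

section Differentiability

lemma differentiableAt_of_forall_exists_norm_sub_le {𝕜 E F : Type*} [NontriviallyNormedField 𝕜]
    [NormedAddCommGroup E] [NormedSpace 𝕜 E] [NormedAddCommGroup F] [NormedSpace 𝕜 F]
    [CompleteSpace F] {f : E → F} {p : E}
    (hf : ∀ ε > 0, ∃ A : E →L[𝕜] F, ∀ᶠ x in 𝓝 p, ‖f x - f p - A (x - p)‖ ≤ ε * ‖x - p‖) :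
    DifferentiableAt 𝕜 f p := by
  obtain ⟨ε, -, hε_pos, hε⟩ := exists_seq_strictAnti_tendsto (0 : ℝ)
  choose A hA using fun n => hf (ε n) (hε_pos n)
  have hdist : ∀ m n, dist (A m) (A n) ≤ ε m + ε n := by
    intro m n
    rw [dist_eq_norm]
    refine ContinuousLinearMap.opNorm_le_of_nhds_zero (add_pos (hε_pos m) (hε_pos n)).le ?_
    have hp : Tendsto (fun v : E => p + v) (𝓝 0) (𝓝 p) := by
      simpa using (continuous_const_add p).tendsto 0
    filter_upwards [hp.eventually (hA m), hp.eventually (hA n)] with v hm hn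
    simp only [add_sub_cancel_left] at hm hn
    calc ‖(A m - A n) v‖ = ‖f (p + v) - f p - A n v - (f (p + v) - f p - A m v)‖ := by
          rw [sub_apply]; abel_nf
      _ ≤ ε n * ‖v‖ + ε m * ‖v‖ := (norm_sub_le _ _).trans (add_le_add hn hm)
      _ = (ε m + ε n) * ‖v‖ := by ring
  have hcauchy : CauchySeq A := by
    refine Metric.cauchySeq_iff.2 fun δ hδ => ?_
    obtain ⟨N, hN⟩ := eventually_atTop.1 (hε.eventually_lt_const (half_pos hδ))
    exact ⟨N, fun m hm n hn => (hdist m n).trans_lt (by linarith [hN m hm, hN n hn])⟩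
  obtain ⟨B, hB⟩ := cauchySeq_tendsto_of_complete hcauchy
  have hAB : ∀ m, dist (A m) B ≤ ε m := fun m =>
    le_of_tendsto_of_tendsto (tendsto_const_nhds.dist hB)
      (by simpa using hε.const_add (ε m)) (Eventually.of_forall (hdist m))
  refine HasFDerivAt.differentiableAt (f' := B) (.of_isLittleO (isLittleO_iff.2 fun c hc => ?_))
  obtain ⟨m, hm⟩ := (hε.eventually_lt_const (half_pos hc)).exists
  filter_upwards [hA m] with x hx
  calc ‖f x - f p - B (x - p)‖ = ‖f x - f p - A m (x - p) + (A m - B) (x - p)‖ := by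
        rw [sub_apply]; abel_nf
    _ ≤ ε m * ‖x - p‖ + ε m * ‖x - p‖ := (norm_add_le _ _).trans <| add_le_add hx <|
        (A m - B).le_of_opNorm_le (dist_eq_norm (A m) B ▸ hAB m) _
    _ ≤ c * ‖x - p‖ := by rw [← add_mul]; gcongr; linarith

lemma exists_forall_sum_norm_repr_mul_sq_le {ι 𝕜 E : Type*} [Fintype ι] [RCLike 𝕜]
    [NormedAddCommGroup E] [NormedSpace 𝕜 E] (b : Module.Basis ι 𝕜 E) :
    ∃ S : ℝ, ∀ h : ℝ, 0 < h → ∀ x,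
      ∑ i, ‖b.repr x i * (h : 𝕜)⁻¹‖ * ‖(h : 𝕜) • b i‖ ^ 2 ≤ h * S * ‖x‖ := by
  have : FiniteDimensional 𝕜 E := b.finiteDimensional_of_finite
  let κ : ι → E →L[𝕜] 𝕜 := fun i => (b.coord i).toContinuousLinearMap
  refine ⟨∑ i, ‖κ i‖ * ‖b i‖ ^ 2, fun h hpos x => ?_⟩
  rw [Finset.mul_sum, Finset.sum_mul]
  refine Finset.sum_le_sum fun i _ => ?_
  rw [norm_smul, norm_mul, norm_inv, RCLike.norm_ofReal, abs_of_pos hpos]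
  calc ‖κ i x‖ * h⁻¹ * (h * ‖b i‖) ^ 2
      ≤ ‖κ i‖ * ‖x‖ * h⁻¹ * (h * ‖b i‖) ^ 2 := by gcongr; exact (κ i).le_opNorm _
    _ = h * (‖κ i‖ * ‖b i‖ ^ 2) * ‖x‖ := by field_simp

-- The candidate differential sends the basis vector `b i` to the difference quotient of `f` in
-- direction `b i` with step `h`; its error on `x - p` is of order `h * ‖x - p‖`.
lemma differentiableAt_of_norm_sub_sum_smul_le {ι 𝕜 E F : Type*} [Fintype ι] [RCLike 𝕜]
    [NormedAddCommGroup E] [NormedSpace 𝕜 E] [NormedAddCommGroup F] [NormedSpace 𝕜 F]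
    [CompleteSpace F] (b : Module.Basis ι 𝕜 E) {f : E → F} {p : E} {r C : ℝ} (hr : 0 < r)
    (hf : ∀ (a : ι → 𝕜) (v : ι → E), (∀ i, ‖v i‖ < r) → ‖∑ i, a i • v i‖ < r →
      ‖f (p + ∑ i, a i • v i) - f p - ∑ i, a i • (f (p + v i) - f p)‖ ≤
        C * (‖∑ i, a i • v i‖ ^ 2 + ∑ i, ‖a i‖ * ‖v i‖ ^ 2)) :
    DifferentiableAt 𝕜 f p := by
  have : FiniteDimensional 𝕜 E := b.finiteDimensional_of_finite
  let κ : ι → E →L[𝕜] 𝕜 := fun i => (b.coord i).toContinuousLinearMap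
  obtain ⟨S, hS⟩ := exists_forall_sum_norm_repr_mul_sq_le b
  refine differentiableAt_of_forall_exists_norm_sub_le fun ε hε => ?_
  have hsmall : ∀ᶠ h in 𝓝[>] (0 : ℝ), (∀ i, h * ‖b i‖ < r) ∧ |C| * (h + h * S) < ε := by
    have hlim : ∀ A c : ℝ, 0 < A → ∀ᶠ h in 𝓝[>] (0 : ℝ), h * c < A := fun A c hA =>
      nhdsWithin_le_nhds <| (continuous_mul_const c).continuousAt.eventually_lt_const (by simpa)
    filter_upwards [eventually_all.2 fun i => hlim r ‖b i‖ hr, hlim ε (|C| * (1 + S)) hε]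
      with h h₁ h₂
    exact ⟨h₁, by linarith⟩
  obtain ⟨h, ⟨hball, hCε⟩, hpos : 0 < h⟩ := (hsmall.and self_mem_nhdsWithin).exists
  have hh : (h : 𝕜) ≠ 0 := RCLike.ofReal_ne_zero.2 hpos.ne'
  let v : ι → E := fun i => (h : 𝕜) • b i
  have hv : ∀ i, ‖v i‖ < r := fun i => by
    rw [norm_smul, RCLike.norm_ofReal, abs_of_pos hpos]
    exact hball i
  refine ⟨∑ i, (κ i).smulRight ((h : 𝕜)⁻¹ • (f (p + v i) - f p)), ?_⟩
  filter_upwards [ball_mem_nhds p (lt_min hr hpos)] with x hx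
  obtain ⟨hxr, hxh⟩ := lt_min_iff.1 (mem_ball_iff_norm.1 hx)
  let a : ι → 𝕜 := fun i => κ i (x - p) * (h : 𝕜)⁻¹
  have hav : ∑ i, a i • v i = x - p := by
    simp only [a, v, smul_smul, inv_mul_cancel_right₀ hh]
    exact b.sum_repr (x - p)
  have key := hf a v hv (by rwa [hav])
  rw [hav, add_sub_cancel] at key
  calc _ ≤ C * (‖x - p‖ ^ 2 + ∑ i, ‖a i‖ * ‖v i‖ ^ 2) := by
        simpa [a, smul_smul, sum_apply] using key
    _ ≤ |C| * (h * ‖x - p‖ + h * S * ‖x - p‖) := by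
        gcongr
        · exact le_abs_self C
        · rw [sq]; gcongr
        · exact hS h hpos (x - p)
    _ = |C| * (h + h * S) * ‖x - p‖ := by ring
    _ ≤ ε * ‖x - p‖ := by gcongr

end Differentiability

section Holomorphic

variable {E F : Type*} [NormedAddCommGroup E] [NormedSpace ℂ E] [NormedAddCommGroup F]
  [NormedSpace ℂ F]

lemma norm_sub_sub_fderiv_le_of_mapsTo_ball {f : E → F} {p x : E} {R M : ℝ}
    (hf : DifferentiableOn ℂ f (ball p R)) (hM : MapsTo f (ball p R) (closedBall (f p) M))
    (hx : x ∈ ball p R) :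
    ‖f x - f p - fderiv ℂ f p (x - p)‖ ≤ 2 * M / R ^ 2 * ‖x - p‖ ^ 2 := by
  have hR : 0 < R := nonempty_ball.1 ⟨x, hx⟩
  have hfp : HasFDerivAt f (fderiv ℂ f p) p :=
    (hf.differentiableAt (ball_mem_nhds p hR)).hasFDerivAt
  have hM' : ‖fderiv ℂ f p‖ ≤ M / R := norm_fderiv_le_div_of_mapsTo_ball hf hM hR
  let g : E → F := fun y => f y - fderiv ℂ f p (y - p)
  have hgp : ∀ y, g y - g p = f y - f p - fderiv ℂ f p (y - p) := fun y => by
    simp only [g, sub_self, map_zero]; abel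
  have hg : DifferentiableOn ℂ g (ball p R) := hf.sub (by fun_prop)
  have hmaps : MapsTo g (ball p R) (closedBall (g p) (2 * M)) := fun y hy => by
    rw [mem_closedBall, dist_eq_norm, hgp]
    calc ‖f y - f p - fderiv ℂ f p (y - p)‖ ≤ M + M / R * R := by
          refine (norm_sub_le _ _).trans (add_le_add (mem_closedBall_iff_norm.1 (hM hy)) ?_)
          refine (fderiv ℂ f p).le_of_opNorm_le_of_le hM' (mem_ball_iff_norm.1 hy).le
      _ = 2 * M := by field_simp; ring
  have key := dist_le_mul_div_pow_of_mapsTo_ball_of_isLittleO (n := 1) hg hmaps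
    (by simpa only [hgp, pow_one] using hfp.isLittleO.norm_right) hx
  rw [dist_eq_norm, hgp, dist_eq_norm] at key
  exact key.trans_eq (by ring)

lemma norm_fderiv_sub_fderiv_le {f : E → F} {p q : E} {R Δ : ℝ}
    (hf : DifferentiableOn ℂ f (ball p R))
    (hΔ : ∀ x ∈ ball p R, ∀ y ∈ ball p R, dist (f x) (f y) ≤ Δ) (hq : q ∈ ball p (R / 2)) :
    ‖fderiv ℂ f q - fderiv ℂ f p‖ ≤ 8 * Δ / R ^ 2 * ‖q - p‖ := by
  have hR : 0 < R / 2 := nonempty_ball.1 ⟨q, hq⟩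
  have hqp : ‖q - p‖ < R / 2 := mem_ball_iff_norm.1 hq
  have hadd : ∀ x ∈ ball p (R / 2), x + (q - p) ∈ ball x (R / 2) ∧ ball x (R / 2) ⊆ ball p R :=
    fun x hx => ⟨by simpa [mem_ball_iff_norm] using hqp, ball_subset_ball' (by
      linarith [mem_ball.1 hx])⟩
  have hlip : ∀ x ∈ ball p (R / 2), ‖f (x + (q - p)) - f x‖ ≤ Δ / (R / 2) * ‖q - p‖ := by
    intro x hx
    obtain ⟨hxq, hsub⟩ := hadd x hx
    simpa [dist_eq_norm] using dist_le_div_mul_dist_of_mapsTo_ball (hf.mono hsub)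
      (fun y hy => mem_closedBall.2 (hΔ y (hsub hy) x (hsub (mem_ball_self hR)))) hxq
  have hdiff : DifferentiableOn ℂ (fun x => f (x + (q - p)) - f x) (ball p (R / 2)) :=
    (hf.comp (by fun_prop) fun x hx => (hadd x hx).2 (hadd x hx).1).sub
      (hf.mono (ball_subset_ball (by linarith)))
  have hderiv : fderiv ℂ (fun x => f (x + (q - p)) - f x) p = fderiv ℂ f q - fderiv ℂ f p := by
    have hmem : ∀ x ∈ ball p (R / 2), DifferentiableAt ℂ f x := fun x hx =>
      hf.differentiableAt (isOpen_ball.mem_nhds ((hadd x hx).2 (mem_ball_self hR)))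
    have hq' := hmem q hq
    rw [fderiv_fun_sub _ (hmem p (mem_ball_self hR)), fderiv_comp_add_right, add_sub_cancel]
    exact DifferentiableAt.comp p (by simpa) (by fun_prop)
  rw [← hderiv]
  refine (norm_fderiv_le_div_of_mapsTo_ball (R₂ := 2 * (Δ / (R / 2) * ‖q - p‖)) hdiff
    (fun x hx => mem_closedBall_iff_norm.2 ?_) hR).trans_eq (by field_simp; ring)
  rw [two_mul]
  exact (norm_sub_le _ _).trans (add_le_add (hlip x hx) (hlip p (mem_ball_self hR)))

lemma exists_forall_norm_sub_sub_fderiv_le_of_isCompact [ProperSpace E] {D K : Set E} {f : E → F}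
    (hD : IsOpen D) (hf : DifferentiableOn ℂ f D) (hK : IsCompact K) (hKD : K ⊆ D) :
    ∃ δ > 0, ∃ L > 0, ∀ p ∈ K, ‖fderiv ℂ f p‖ ≤ L ∧ ∀ x ∈ ball p δ,
      ‖f x - f p‖ ≤ L * ‖x - p‖ ∧
      ‖f x - f p - fderiv ℂ f p (x - p)‖ ≤ L * ‖x - p‖ ^ 2 := by
  obtain ⟨δ, hδ, hδD⟩ := hK.exists_cthickening_subset_open hD hKD
  obtain ⟨M, hM⟩ := (hK.cthickening (r := δ)).exists_bound_of_continuousOn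
    (hf.continuousOn.mono hδD)
  have hball : ∀ p ∈ K, ball p δ ⊆ cthickening δ K := fun p hp =>
    ball_subset_closedBall.trans (closedBall_subset_cthickening hp δ)
  refine ⟨δ, hδ, |2 * M / δ| + |2 * (2 * M) / δ ^ 2| + 1, by positivity, fun p hp => ?_⟩
  set L := |2 * M / δ| + |2 * (2 * M) / δ ^ 2| + 1
  have hL₁ : 2 * M / δ ≤ L := by
    linarith [le_abs_self (2 * M / δ), abs_nonneg (2 * (2 * M) / δ ^ 2)]
  have hL₂ : 2 * (2 * M) / δ ^ 2 ≤ L := by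
    linarith [le_abs_self (2 * (2 * M) / δ ^ 2), abs_nonneg (2 * M / δ)]
  have hfp : DifferentiableOn ℂ f (ball p δ) := hf.mono ((hball p hp).trans hδD)
  have hmaps : MapsTo f (ball p δ) (closedBall (f p) (2 * M)) := fun x hx => by
    rw [mem_closedBall_iff_norm, two_mul]
    exact (norm_sub_le _ _).trans
      (add_le_add (hM x (hball p hp hx)) (hM p (hball p hp (mem_ball_self hδ))))
  refine ⟨(norm_fderiv_le_div_of_mapsTo_ball hfp hmaps hδ).trans hL₁, fun x hx => ⟨?_, ?_⟩⟩
  · rw [← dist_eq_norm, ← dist_eq_norm]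
    exact (dist_le_div_mul_dist_of_mapsTo_ball hfp hmaps hx).trans (by gcongr)
  · exact (norm_sub_sub_fderiv_le_of_mapsTo_ball hfp hmaps hx).trans (by gcongr)

lemma locallyLipschitzOn_of_differentiableOn {D : Set E} {f : E → F} (hD : IsOpen D)
    (hf : DifferentiableOn ℂ f D) : LocallyLipschitzOn D f := by
  intro p hp
  obtain ⟨r, hr, hrD⟩ : ∃ r > 0, ball p (3 * r) ⊆ D ∩ f ⁻¹' ball (f p) 1 := by
    obtain ⟨r, hr, h⟩ := Metric.mem_nhds_iff.1 (inter_mem (hD.mem_nhds hp)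
      ((hf.differentiableAt (hD.mem_nhds hp)).continuousAt.preimage_mem_nhds
        (ball_mem_nhds (f p) one_pos)))
    exact ⟨r / 3, by positivity, by rwa [mul_div_cancel₀ r three_ne_zero]⟩
  refine ⟨Real.toNNReal (2 / (2 * r)), ball p r, nhdsWithin_le_nhds (ball_mem_nhds p hr),
    LipschitzOnWith.of_dist_le_mul fun x hx y hy => ?_⟩
  rw [Real.coe_toNNReal _ (by positivity)]
  have hsub : ball y (2 * r) ⊆ D ∩ f ⁻¹' ball (f p) 1 :=
    (ball_subset_ball' (by linarith [mem_ball.1 hy])).trans hrD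
  refine dist_le_div_mul_dist_of_mapsTo_ball (hf.mono fun w hw => (hsub hw).1)
    (fun w hw => mem_closedBall.2 ?_) (mem_ball.2 ?_)
  · have hw : dist (f w) (f p) < 1 := (hsub hw).2
    have hy : dist (f y) (f p) < 1 := (hsub (mem_ball_self (by positivity))).2
    linarith [dist_triangle_right (f w) (f y) (f p)]
  · linarith [dist_triangle_right x y p, mem_ball.1 hx, mem_ball.1 hy]

lemma exists_norm_fderiv_le_of_eventually_norm_le {ι : Type*} {D : Set E} {f : ι → E → F} {p : E}
    {M : ℝ} (hD : IsOpen D) (hf : ∀ k, DifferentiableOn ℂ (f k) D) (hp : p ∈ D)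
    (hM : ∀ᶠ x in 𝓝 p, ∀ k, ‖f k x‖ ≤ M) : ∃ C, ∀ k, ‖fderiv ℂ (f k) p‖ ≤ C := by
  obtain ⟨R, hR, hRD⟩ := Metric.mem_nhds_iff.1 (hM.and (hD.mem_nhds hp))
  refine ⟨2 * M / R, fun k => norm_fderiv_le_div_of_mapsTo_ball
    ((hf k).mono fun x hx => (hRD hx).2) (fun x hx => mem_closedBall_iff_norm.2 ?_) hR⟩
  rw [two_mul]
  exact (norm_sub_le _ _).trans (add_le_add ((hRD hx).1 k) (hM.self_of_nhds k))

lemma norm_sub_sub_le_of_tendstoUniformlyOn_ball {ι : Type*} {l : Filter ι} [l.NeBot]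
    {f : ι → E → F} {g : E → F} {p : E} {R ε : ℝ}
    (hR : 0 < R) (hf : ∀ k, DifferentiableOn ℂ (f k) (ball p R))
    (hfg : TendstoUniformlyOn f g l (ball p R)) (hε : 0 < ε) :
    ∀ᶠ k in l, ∀ x ∈ ball p R, ‖g x - g p - (f k x - f k p)‖ ≤ 4 * ε / R * ‖x - p‖ := by
  have hp : p ∈ ball p R := mem_ball_self hR
  have hclose := Metric.tendstoUniformlyOn_iff.1 hfg ε hε
  filter_upwards [hclose] with k hk x hx
  have hlim : Tendsto (fun m => ‖f m x - f m p - (f k x - f k p)‖) l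
      (𝓝 ‖g x - g p - (f k x - f k p)‖) :=
    (((hfg.tendsto_at hx).sub (hfg.tendsto_at hp)).sub_const _).norm
  refine le_of_tendsto hlim ?_
  filter_upwards [hclose] with m hm
  have hdist : ∀ y ∈ ball p R, ‖f m y - f k y‖ ≤ 2 * ε := fun y hy => by
    rw [← dist_eq_norm]
    linarith [dist_triangle_left (f m y) (f k y) (g y), hm y hy, hk y hy]
  have h := dist_le_div_mul_dist_of_mapsTo_ball (R₂ := 4 * ε) ((hf m).fun_sub (hf k))
    (fun y hy => mem_closedBall_iff_norm.2 ((norm_sub_le _ _).trans ?_)) hx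
  · rwa [dist_eq_norm, dist_eq_norm, sub_sub_sub_comm] at h
  · linarith [hdist y hy, hdist p hp]

lemma differentiableOn_of_tendstoLocallyUniformlyOn {ι : Type*} {l : Filter ι} [l.NeBot]
    [ProperSpace E] [CompleteSpace F] {D : Set E} {f : ι → E → F} {g : E → F} (hD : IsOpen D)
    (hf : ∀ k, DifferentiableOn ℂ (f k) D) (hfg : TendstoLocallyUniformlyOn f g l D) :
    DifferentiableOn ℂ g D := by
  intro p hp
  obtain ⟨R, hR, hRD⟩ := Metric.nhds_basis_closedBall.mem_iff.1 (hD.mem_nhds hp)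
  have hsub : ball p R ⊆ D := ball_subset_closedBall.trans hRD
  have hunif : TendstoUniformlyOn f g l (ball p R) :=
    ((tendstoLocallyUniformlyOn_iff_forall_isCompact hD).1 hfg _ hRD
      (isCompact_closedBall p R)).mono ball_subset_closedBall
  refine (differentiableAt_of_forall_exists_norm_sub_le fun ε hε => ?_).differentiableWithinAt
  obtain ⟨k, hk⟩ := (norm_sub_sub_le_of_tendstoUniformlyOn_ball hR (fun k => (hf k).mono hsub) hunif
    (ε := ε / 2 * R / 4) (by positivity)).exists
  have hfk := ((hf k).differentiableAt (hD.mem_nhds hp)).hasFDerivAt.isLittleO.def (half_pos hε)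
  refine ⟨fderiv ℂ (f k) p, ?_⟩
  filter_upwards [hfk, ball_mem_nhds p hR] with x hx hxR
  calc ‖g x - g p - fderiv ℂ (f k) p (x - p)‖
      = ‖g x - g p - (f k x - f k p) + (f k x - f k p - fderiv ℂ (f k) p (x - p))‖ := by abel_nf
    _ ≤ 4 * (ε / 2 * R / 4) / R * ‖x - p‖ + ε / 2 * ‖x - p‖ :=
        (norm_add_le _ _).trans (add_le_add (hk x hxR) hx)
    _ = ε * ‖x - p‖ := by field_simp; ring

lemma equicontinuousOn_of_eventually_norm_le {ι : Type*} {D : Set E} {f : ι → E → F} (hD : IsOpen D)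
    (hf : ∀ k, DifferentiableOn ℂ (f k) D)
    (hbdd : ∀ p ∈ D, ∃ M, ∀ᶠ x in 𝓝 p, ∀ k, ‖f k x‖ ≤ M) : EquicontinuousOn f D := by
  intro p hp
  obtain ⟨M, hM⟩ := hbdd p hp
  obtain ⟨R, hR, hRD⟩ := Metric.mem_nhds_iff.1 (inter_mem (hD.mem_nhds hp) hM)
  have hlip : ∀ x ∈ ball p R, ∀ k, dist (f k p) (f k x) ≤ 2 * M / R * dist x p := fun x hx k => by
    rw [dist_comm]
    refine dist_le_div_mul_dist_of_mapsTo_ball ((hf k).mono fun w hw => (hRD hw).1)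
      (fun w hw => mem_closedBall_iff_norm.2 ?_) hx
    rw [two_mul]
    exact (norm_sub_le _ _).trans (add_le_add ((hRD hw).2 k) ((hRD (mem_ball_self hR)).2 k))
  refine (Metric.equicontinuousAt_of_continuity_modulus (fun x => 2 * M / R * dist x p) ?_ f
    ?_).equicontinuousWithinAt D
  · have : Continuous fun x => 2 * M / R * dist x p := by fun_prop
    simpa using this.tendsto p
  · filter_upwards [ball_mem_nhds p hR] with x hx using hlip x hx

lemma exists_subseq_tendstoLocallyUniformly {X α : Type*} [TopologicalSpace X]
    [LocallyCompactSpace X] [SigmaCompactSpace X] [MetricSpace α]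
    {f : ℕ → C(X, α)} (hf : Equicontinuous (fun k => (f k : X → α)))
    (hbdd : ∀ x, ∃ Q, IsCompact Q ∧ ∀ k, f k x ∈ Q) :
    ∃ φ : ℕ → ℕ, StrictMono φ ∧
      ∃ g : C(X, α), TendstoLocallyUniformly (fun k => (f (φ k) : X → α)) g atTop := by
  have hcompact : IsCompact (closure (range f)) := by
    refine ArzelaAscoli.isCompact_closure_of_isClosedEmbedding (𝔖 := {K | IsCompact K})
      (F := fun f : C(X, α) => (f : X → α)) (fun K hK => hK) ?_ ?_ ?_
    · refine ⟨ContinuousMap.isUniformEmbedding_toUniformOnFunIsCompact.isEmbedding, ?_⟩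
      change IsClosed (range ContinuousMap.toUniformOnFunIsCompact)
      rw [ContinuousMap.range_toUniformOnFunIsCompact]
      exact UniformOnFun.isClosed_setOfPred_continuous CompactlyCoherentSpace.isCoherentWith
    · rintro K -
      refine Equicontinuous.equicontinuousOn (fun x V hV => ?_) K
      filter_upwards [hf x V hV] with y hy
      rintro ⟨-, k, rfl⟩
      exact hy k
    · rintro K - x -
      obtain ⟨Q, hQ, hfQ⟩ := hbdd x
      exact ⟨Q, hQ, forall_mem_range.2 hfQ⟩
  obtain ⟨g, -, φ, hφ, hg⟩ := hcompact.tendsto_subseq fun k => subset_closure (mem_range_self k)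
  exact ⟨φ, hφ, g, ContinuousMap.tendsto_iff_tendstoLocallyUniformly.1 hg⟩

lemma exists_subseq_tendstoLocallyUniformlyOn [ProperSpace E] [ProperSpace F] {D : Set E}
    {f : ℕ → E → F} (hD : IsOpen D) (hf : ∀ k, DifferentiableOn ℂ (f k) D)
    (hbdd : ∀ p ∈ D, ∃ M, ∀ᶠ x in 𝓝 p, ∀ k, ‖f k x‖ ≤ M) :
    ∃ φ : ℕ → ℕ, StrictMono φ ∧ ∃ g : E → F,
      TendstoLocallyUniformlyOn (fun k => f (φ k)) g atTop D := by
  have : LocallyCompactSpace D := hD.locallyCompactSpace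
  obtain ⟨φ, hφ, g, hg⟩ := exists_subseq_tendstoLocallyUniformly (X := D) (α := F)
    (f := fun k => ⟨D.domRestrict (f k), (hf k).continuousOn.domRestrict⟩)
    ((equicontinuous_restrict_iff f).2 (equicontinuousOn_of_eventually_norm_le hD hf hbdd))
    fun x => by
      obtain ⟨M, hM⟩ := hbdd x x.2
      exact ⟨closedBall 0 M, isCompact_closedBall 0 M, fun k =>
        mem_closedBall_zero_iff.2 (hM.self_of_nhds k)⟩
  refine ⟨φ, hφ, Function.extend Subtype.val g 0, ?_⟩
  rw [tendstoLocallyUniformlyOn_iff_tendstoLocallyUniformly_comp_coe,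
    Function.extend_comp Subtype.val_injective]
  exact hg

end Holomorphic

section Trajectory

variable {F : Type*} [NormedAddCommGroup F] [NormedSpace ℝ F] {D : Set F} {G : F → F}
  {u v : ℝ → F}

/-- `u` is an integral curve of the vector field `G`, defined for all nonnegative times and staying
in `D`. The derivative at time `0` is two-sided, so `u` also solves the equation to first order
just before `0`; its other values at negative times are irrelevant. -/
def IsTrajectory (D : Set F) (G : F → F) (u : ℝ → F) : Prop :=
  ∀ t : ℝ, 0 ≤ t → u t ∈ D ∧ HasDerivAt u (G (u t)) t

namespace IsTrajectory

lemma mem (hu : IsTrajectory D G u) {t : ℝ} (ht : 0 ≤ t) : u t ∈ D := (hu t ht).1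

lemma hasDerivAt (hu : IsTrajectory D G u) {t : ℝ} (ht : 0 ≤ t) : HasDerivAt u (G (u t)) t :=
  (hu t ht).2

lemma continuousOn (hu : IsTrajectory D G u) : ContinuousOn u (Ici 0) :=
  fun _ ht => (hu.hasDerivAt ht).continuousAt.continuousWithinAt

lemma isCompact_image_Icc (hu : IsTrajectory D G u) (T : ℝ) : IsCompact (u '' Icc 0 T) :=
  isCompact_Icc.image_of_continuousOn (hu.continuousOn.mono Icc_subset_Ici_self)

lemma image_Icc_subset (hu : IsTrajectory D G u) (T : ℝ) : u '' Icc 0 T ⊆ D :=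
  image_subset_iff.2 fun _ ht => hu.mem ht.1

lemma comp_add_right (hu : IsTrajectory D G u) {s : ℝ} (hs : 0 ≤ s) :
    IsTrajectory D G (fun t => u (t + s)) := fun t ht =>
  ⟨hu.mem (by positivity), (hu.hasDerivAt (by positivity)).comp_add_const t s⟩

lemma eqOn_Ici (hG : LocallyLipschitzOn D G) (hu : IsTrajectory D G u) (hv : IsTrajectory D G v)
    (h₀ : u 0 = v 0) : EqOn u v (Ici 0) := by
  intro T hT
  have hsub : u '' Icc 0 T ∪ v '' Icc 0 T ⊆ D :=
    union_subset (hu.image_Icc_subset T) (hv.image_Icc_subset T)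
  obtain ⟨L, hL⟩ := (hG.mono hsub).exists_lipschitzOnWith_of_compact
    ((hu.isCompact_image_Icc T).union (hv.isCompact_image_Icc T))
  exact ODE_solution_unique_of_mem_Icc_right (v := fun _ => G)
    (s := fun _ => u '' Icc 0 T ∪ v '' Icc 0 T) (fun _ _ => hL)
    (hu.continuousOn.mono Icc_subset_Ici_self) (fun t ht => (hu.hasDerivAt ht.1).hasDerivWithinAt)
    (fun t ht => .inl (mem_image_of_mem u (Ico_subset_Icc_self ht)))
    (hv.continuousOn.mono Icc_subset_Ici_self) (fun t ht => (hv.hasDerivAt ht.1).hasDerivWithinAt)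
    (fun t ht => .inr (mem_image_of_mem v (Ico_subset_Icc_self ht))) h₀ ⟨hT, le_rfl⟩

-- The Lipschitz bound is only needed where the two curves are at the distance allowed by the
-- conclusion, so no continuation argument is required to stay in the tube.
lemma norm_sub_le (hu : IsTrajectory D G u) (hv : IsTrajectory D G v) {T L δ η : ℝ} (hL : 0 ≤ L)
    (hG : ∀ t ∈ Icc 0 T, ∀ y ∈ ball (v t) δ, ‖G y - G (v t)‖ ≤ L * ‖y - v t‖) (hη : 0 < η)
    (h₀ : ‖u 0 - v 0‖ ≤ η) (hδ : η * Real.exp ((L + 1) * T) < δ) {t : ℝ} (ht : t ∈ Icc 0 T) :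
    ‖u t - v t‖ ≤ η * Real.exp ((L + 1) * t) := by
  have hB : ∀ t, HasDerivAt (fun t => η * Real.exp ((L + 1) * t))
      ((L + 1) * (η * Real.exp ((L + 1) * t))) t := fun t => by
    convert! (((hasDerivAt_id t).const_mul (L + 1)).exp).const_mul η using 1
    simp only [id_eq, mul_one]; ring
  refine image_norm_le_of_norm_deriv_right_lt_deriv_boundary' (f := fun t => u t - v t)
    (f' := fun t => G (u t) - G (v t)) (a := 0) (b := T)
    ((hu.continuousOn.sub hv.continuousOn).mono Icc_subset_Ici_self)
    (fun t ht => ((hu.hasDerivAt ht.1).sub (hv.hasDerivAt ht.1)).hasDerivWithinAt)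
    (by simpa using h₀) (fun t _ => (hB t).continuousAt.continuousWithinAt)
    (fun t _ => (hB t).hasDerivWithinAt) (fun t ht heq => ?_) ht
  have hmem : u t ∈ ball (v t) δ := by
    rw [mem_ball_iff_norm, heq]
    refine lt_of_le_of_lt ?_ hδ
    gcongr
    exact ht.2.le
  calc ‖G (u t) - G (v t)‖ ≤ L * ‖u t - v t‖ := hG t (Ico_subset_Icc_self ht) _ hmem
    _ < (L + 1) * (η * Real.exp ((L + 1) * t)) := by
      rw [heq]
      gcongr
      linarith

end IsTrajectory

/-- `Φ` is the semiflow on `D` generated by the vector field `G`. -/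
structure IsSemiflow (D : Set F) (G : F → F) (Φ : ℝ → F → F) : Prop where
  zero_apply : ∀ z ∈ D, Φ 0 z = z
  isTrajectory : ∀ z ∈ D, IsTrajectory D G fun t => Φ t z

namespace IsSemiflow

variable {Φ : ℝ → F → F} {z : F} {s t : ℝ}

lemma mapsTo (hΦ : IsSemiflow D G Φ) (ht : 0 ≤ t) : MapsTo (Φ t) D D :=
  fun z hz => (hΦ.isTrajectory z hz).mem ht

lemma add_apply (hΦ : IsSemiflow D G Φ) (hG : LocallyLipschitzOn D G) (hz : z ∈ D) (hs : 0 ≤ s)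
    (ht : 0 ≤ t) : Φ (t + s) z = Φ t (Φ s z) :=
  ((hΦ.isTrajectory z hz).comp_add_right hs).eqOn_Ici hG (hΦ.isTrajectory _ (hΦ.mapsTo hs hz))
    (by simp only [zero_add, hΦ.zero_apply _ (hΦ.mapsTo hs hz)]) ht

end IsSemiflow

end Trajectory

lemma norm_sub_sum_smul_le_of_norm_sub_apply_le {ι 𝕜 E F : Type*} [Fintype ι]
    [NontriviallyNormedField 𝕜] [NormedAddCommGroup E] [NormedSpace 𝕜 E] [NormedAddCommGroup F]
    [NormedSpace 𝕜 F] {A : E →L[𝕜] F} {C : ℝ} (hA : ‖A‖ ≤ C) {x : E} {y : F} {v : ι → E}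
    {w : ι → F} {q : ℝ} {r : ι → ℝ} (hy : ‖y - A x‖ ≤ C * q)
    (hw : ∀ i, ‖w i - A (v i)‖ ≤ C * r i) (a : ι → 𝕜) :
    ‖y - ∑ i, a i • w i‖ ≤ C * ‖x - ∑ i, a i • v i‖ + C * (q + ∑ i, ‖a i‖ * r i) := by
  have hsplit : y - ∑ i, a i • w i =
      A (x - ∑ i, a i • v i) + (y - A x - ∑ i, a i • (w i - A (v i))) := by
    simp only [map_sub, map_sum, map_smul, smul_sub, Finset.sum_sub_distrib]
    abel
  calc ‖y - ∑ i, a i • w i‖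
      ≤ C * ‖x - ∑ i, a i • v i‖ + (C * q + ∑ i, ‖a i‖ * (C * r i)) := by
        rw [hsplit]
        refine (norm_add_le _ _).trans (add_le_add (A.le_of_opNorm_le hA _) ?_)
        refine (norm_sub_le _ _).trans (add_le_add hy (norm_sum_le_of_le _ fun i _ => ?_))
        rw [norm_smul]
        exact mul_le_mul_of_nonneg_left (hw i) (norm_nonneg _)
    _ = C * ‖x - ∑ i, a i • v i‖ + C * (q + ∑ i, ‖a i‖ * r i) := by
        simp only [mul_add, Finset.mul_sum, mul_left_comm]

lemma norm_le_mul_exp_sub_one_of_norm_deriv_le {E : Type*} [NormedAddCommGroup E]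
    [NormedSpace ℝ E] {f f' : ℝ → E} {C Q T : ℝ} (hC : C ≠ 0) (hT : 0 ≤ T) (h₀ : f 0 = 0)
    (hf : ∀ t ∈ Icc 0 T, HasDerivAt f (f' t) t)
    (hbound : ∀ t ∈ Icc 0 T, ‖f' t‖ ≤ C * ‖f t‖ + C * Q) :
    ‖f T‖ ≤ Q * (Real.exp (C * T) - 1) := by
  have key := norm_le_gronwallBound_of_norm_deriv_right_le (δ := 0) (a := 0) (b := T)
    (fun t ht => (hf t ht).continuousAt.continuousWithinAt)
    (fun t ht => (hf t (Ico_subset_Icc_self ht)).hasDerivWithinAt) (by rw [h₀, norm_zero])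
    (fun t ht => hbound t (Ico_subset_Icc_self ht)) T ⟨hT, le_rfl⟩
  simpa only [gronwallBound_of_K_ne_0 hC, mul_div_cancel_left₀ _ hC, sub_zero, zero_mul, zero_add]
    using key

namespace IsSemiflow

variable {F : Type*} [NormedAddCommGroup F] [NormedSpace ℂ F] {D : Set F} {G : F → F}
  {Φ : ℝ → F → F}

lemma exists_linearization [ProperSpace F] (hΦ : IsSemiflow D G Φ) (hD : IsOpen D)
    (hG : DifferentiableOn ℂ G D) {p : F} (hp : p ∈ D) (T : ℝ) :
    ∃ r > 0, ∃ C > 0, ball p r ⊆ D ∧ ∀ t ∈ Icc 0 T,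
      ‖fderiv ℂ G (Φ t p)‖ ≤ C ∧ ∀ x ∈ ball p r,
        ‖G (Φ t x) - G (Φ t p) - fderiv ℂ G (Φ t p) (Φ t x - Φ t p)‖ ≤ C * ‖x - p‖ ^ 2 := by
  have hu := hΦ.isTrajectory p hp
  obtain ⟨δ, hδ, L, hL, hGL⟩ := exists_forall_norm_sub_sub_fderiv_le_of_isCompact hD hG
    (hu.isCompact_image_Icc T) (hu.image_Icc_subset T)
  replace hGL := fun t (ht : t ∈ Icc 0 T) => hGL (Φ t p) (mem_image_of_mem (fun t => Φ t p) ht)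
  obtain ⟨R, hR, hRD⟩ := Metric.mem_nhds_iff.1 (hD.mem_nhds hp)
  set e := Real.exp ((L + 1) * T)
  have he : 0 < e := Real.exp_pos _
  have hsub : ball p (min R (δ / e)) ⊆ D := (ball_subset_ball (min_le_left _ _)).trans hRD
  refine ⟨min R (δ / e), by positivity, L * (1 + e ^ 2), by positivity, hsub,
    fun t ht => ⟨(hGL t ht).1.trans (by nlinarith [sq_nonneg e]), fun x hx => ?_⟩⟩
  rcases eq_or_ne x p with rfl | hxp
  · simp
  have hxδ : ‖x - p‖ * e < δ :=
    (lt_div_iff₀ he).1 ((mem_ball_iff_norm.1 hx).trans_le (min_le_right _ _))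
  have hdist : ‖Φ t x - Φ t p‖ ≤ ‖x - p‖ * Real.exp ((L + 1) * t) :=
    (hΦ.isTrajectory x (hsub hx)).norm_sub_le hu hL.le
      (fun t ht y hy => ((hGL t ht).2 y hy).1) (norm_sub_pos_iff.2 hxp)
      (by simp only [hΦ.zero_apply x (hsub hx), hΦ.zero_apply p hp, le_refl]) hxδ ht
  have hdist' : ‖Φ t x - Φ t p‖ ≤ ‖x - p‖ * e := hdist.trans <| by
    simp only [e]
    gcongr
    exact ht.2
  calc _ ≤ L * ‖Φ t x - Φ t p‖ ^ 2 :=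
        ((hGL t ht).2 _ (mem_ball_iff_norm.2 (hdist'.trans_lt hxδ))).2
    _ ≤ L * (‖x - p‖ * e) ^ 2 := by gcongr
    _ ≤ L * (1 + e ^ 2) * ‖x - p‖ ^ 2 := by nlinarith [mul_nonneg hL.le (sq_nonneg ‖x - p‖)]

lemma differentiableOn [FiniteDimensional ℂ F] (hΦ : IsSemiflow D G Φ) (hD : IsOpen D)
    (hG : DifferentiableOn ℂ G D) {T : ℝ} (hT : 0 ≤ T) : DifferentiableOn ℂ (Φ T) D := by
  have : ProperSpace F := FiniteDimensional.proper ℂ F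
  intro p hp
  obtain ⟨r, hr, C, hC, hrD, hlin⟩ := hΦ.exists_linearization hD hG hp T
  refine (differentiableAt_of_norm_sub_sum_smul_le (Module.finBasis ℂ F)
    (C := Real.exp (C * T) - 1) hr fun a v hv hav => ?_).differentiableWithinAt
  have hmem : ∀ w : F, ‖w‖ < r → p + w ∈ ball p r := fun w hw => by
    rwa [mem_ball_iff_norm, add_sub_cancel_left]
  have hrem : ∀ w : F, ‖w‖ < r → ∀ t ∈ Icc 0 T,
      ‖G (Φ t (p + w)) - G (Φ t p) - fderiv ℂ G (Φ t p) (Φ t (p + w) - Φ t p)‖ ≤ C * ‖w‖ ^ 2 :=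
    fun w hw t ht => by
      simpa only [add_sub_cancel_left] using (hlin t ht).2 (p + w) (hmem w hw)
  have hderiv : ∀ w : F, ‖w‖ < r → ∀ t ∈ Icc 0 T,
      HasDerivAt (fun t => Φ t (p + w) - Φ t p) (G (Φ t (p + w)) - G (Φ t p)) t := fun w hw t ht =>
    ((hΦ.isTrajectory _ (hrD (hmem w hw))).hasDerivAt ht.1).sub
      ((hΦ.isTrajectory p hp).hasDerivAt ht.1)
  have hzero : ∀ w : F, ‖w‖ < r → Φ 0 (p + w) - Φ 0 p = w := fun w hw => by
    rw [hΦ.zero_apply _ (hrD (hmem w hw)), hΦ.zero_apply p hp, add_sub_cancel_left]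
  rw [mul_comm]
  refine norm_le_mul_exp_sub_one_of_norm_deriv_le hC.ne' hT
    (f := fun t => Φ t (p + ∑ i, a i • v i) - Φ t p - ∑ i, a i • (Φ t (p + v i) - Φ t p))
    ?_ (fun t ht => (hderiv _ hav t ht).sub
      (.fun_sum fun i _ => (hderiv _ (hv i) t ht).const_smul (a i)))
    fun t ht => norm_sub_sum_smul_le_of_norm_sub_apply_le (hlin t ht).1 (hrem _ hav t ht)
      (fun i => hrem _ (hv i) t ht) a
  simp only [hzero _ hav, hzero _ (hv _), sub_self]

end IsSemiflow

section Generator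

variable {F : Type*} [NormedAddCommGroup F] [NormedSpace ℂ F] {D : Set F} {G : F → F}
  {Φ : ℝ → F → F} {p z : F} {C R Δ s : ℝ}

namespace IsSemiflow

variable [FiniteDimensional ℂ F]

lemma fderiv_apply_self (hΦ : IsSemiflow D G Φ) (hD : IsOpen D) (hG : DifferentiableOn ℂ G D)
    (hz : z ∈ D) (hs : 0 ≤ s) : fderiv ℂ (Φ s) z (G z) = G (Φ s z) := by
  have hu := hΦ.isTrajectory z hz
  have hΦz : HasFDerivAt (Φ s) (fderiv ℂ (Φ s) z) (Φ 0 z) := by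
    rw [hΦ.zero_apply z hz]
    exact ((hΦ.differentiableOn hD hG hs).differentiableAt (hD.mem_nhds hz)).hasFDerivAt
  have hleft : HasDerivWithinAt (fun t => Φ s (Φ t z)) (fderiv ℂ (Φ s) z (G z)) (Ici 0) 0 := by
    have hu₀ := hu.hasDerivAt le_rfl
    rw [hΦ.zero_apply z hz] at hu₀
    exact ((hΦz.restrictScalars ℝ).comp_hasDerivAt 0 hu₀).hasDerivWithinAt
  have hright : HasDerivWithinAt (fun t => Φ s (Φ t z)) (G (Φ s z)) (Ici 0) 0 := by
    have hsplit : ∀ t ∈ Ici (0 : ℝ), Φ s (Φ t z) = Φ (t + s) z := fun t ht => by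
      rw [add_comm, hΦ.add_apply (locallyLipschitzOn_of_differentiableOn hD hG) hz ht hs]
    have h := (hu.comp_add_right hs).hasDerivAt le_rfl
    rw [zero_add] at h
    exact h.hasDerivWithinAt.congr hsplit (hsplit 0 self_mem_Ici)
  exact (uniqueDiffOn_Ici (0 : ℝ) 0 self_mem_Ici).eq_deriv _ hleft hright

lemma hasDerivAt (hΦ : IsSemiflow D G Φ) (hD : IsOpen D) (hG : DifferentiableOn ℂ G D)
    (hz : z ∈ D) (hs : 0 ≤ s) : HasDerivAt (fun t => Φ t z) (fderiv ℂ (Φ s) z (G z)) s := by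
  rw [hΦ.fderiv_apply_self hD hG hz hs]
  exact (hΦ.isTrajectory z hz).hasDerivAt hs

lemma norm_fderiv_le (hΦ : IsSemiflow D G Φ) (hD : IsOpen D) (hG : DifferentiableOn ℂ G D)
    (hΔ : ∀ x ∈ D, ∀ y ∈ D, dist x y ≤ Δ) (hR : 0 < R) (hpR : ball p R ⊆ D) (hs : 0 ≤ s) :
    ‖fderiv ℂ (Φ s) p‖ ≤ Δ / R :=
  norm_fderiv_le_div_of_mapsTo_ball ((hΦ.differentiableOn hD hG hs).mono hpR)
    (fun _ hx => hΔ _ (hΦ.mapsTo hs (hpR hx)) _ (hΦ.mapsTo hs (hpR (mem_ball_self hR)))) hR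

lemma norm_fderiv_sub_fderiv_le (hΦ : IsSemiflow D G Φ) (hD : IsOpen D)
    (hG : DifferentiableOn ℂ G D) (hΔ : ∀ x ∈ D, ∀ y ∈ D, dist x y ≤ Δ) (hpR : ball p R ⊆ D)
    (hz : z ∈ ball p (R / 2)) (hs : 0 ≤ s) :
    ‖fderiv ℂ (Φ s) z - fderiv ℂ (Φ s) p‖ ≤ 8 * Δ / R ^ 2 * ‖z - p‖ :=
  _root_.norm_fderiv_sub_fderiv_le ((hΦ.differentiableOn hD hG hs).mono hpR)
    (fun _ hx _ hy => hΔ _ (hΦ.mapsTo hs (hpR hx)) _ (hΦ.mapsTo hs (hpR hy))) hz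

lemma norm_sub_sub_sub_le (hΦ : IsSemiflow D G Φ) (hD : IsOpen D) (hG : DifferentiableOn ℂ G D)
    (hΔ : ∀ x ∈ D, ∀ y ∈ D, dist x y ≤ Δ) (hpR : ball p R ⊆ D) (hz : z ∈ ball p (R / 2))
    (hs : 0 ≤ s) :
    ‖Φ s z - Φ s p - (z - p)‖ ≤
      (8 * Δ / R ^ 2 * ‖z - p‖ * ‖G z‖ + Δ / R * ‖G z - G p‖) * s := by
  have hR : 0 < R / 2 := nonempty_ball.1 ⟨z, hz⟩
  have hpD : p ∈ D := hpR (mem_ball_self (by linarith))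
  have hzD : z ∈ D := hpR (ball_subset_ball (by linarith) hz)
  have hbound : ∀ t, 0 ≤ t → ‖fderiv ℂ (Φ t) z (G z) - fderiv ℂ (Φ t) p (G p)‖ ≤
      8 * Δ / R ^ 2 * ‖z - p‖ * ‖G z‖ + Δ / R * ‖G z - G p‖ := fun t ht => by
    have hsplit : fderiv ℂ (Φ t) z (G z) - fderiv ℂ (Φ t) p (G p) =
        (fderiv ℂ (Φ t) z - fderiv ℂ (Φ t) p) (G z) + fderiv ℂ (Φ t) p (G z - G p) := by
      simp only [sub_apply, map_sub, sub_add_sub_cancel]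
    rw [hsplit]
    exact (norm_add_le _ _).trans (add_le_add
      (ContinuousLinearMap.le_of_opNorm_le _
        (hΦ.norm_fderiv_sub_fderiv_le hD hG hΔ hpR hz ht) _)
      (ContinuousLinearMap.le_of_opNorm_le _
        (hΦ.norm_fderiv_le hD hG hΔ (by linarith) hpR ht) _))
  simpa only [hΦ.zero_apply z hzD, hΦ.zero_apply p hpD, sub_zero] using
    norm_image_sub_le_of_norm_deriv_le_segment' (f := fun t => Φ t z - Φ t p) (a := 0) (b := s)
      (fun t ht => ((hΦ.hasDerivAt hD hG hzD ht.1).sub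
        (hΦ.hasDerivAt hD hG hpD ht.1)).hasDerivWithinAt)
      (fun t ht => hbound t ht.1) s ⟨hs, le_rfl⟩

lemma norm_fderiv_sub_id_le (hΦ : IsSemiflow D G Φ) (hD : IsOpen D) (hG : DifferentiableOn ℂ G D)
    (hΔ : ∀ x ∈ D, ∀ y ∈ D, dist x y ≤ Δ) (hR : 0 < R) (hpR : ball p R ⊆ D) (hGp : ‖G p‖ < C)
    (hGp' : ‖fderiv ℂ G p‖ < C) (hs : 0 ≤ s) :
    ‖fderiv ℂ (Φ s) p - .id ℂ F‖ ≤ (8 * Δ / R ^ 2 + Δ / R) * C * s := by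
  have hpD : p ∈ D := hpR (mem_ball_self hR)
  have hΔ₀ : 0 ≤ Δ := dist_nonneg.trans (hΔ p hpD p hpD)
  have hC : 0 ≤ C := (norm_nonneg _).trans hGp.le
  have hGd := hG.differentiableAt (hD.mem_nhds hpD)
  have hΦd := (hΦ.differentiableOn hD hG hs).differentiableAt (hD.mem_nhds hpD)
  have hlip : ∀ᶠ z in 𝓝 p, ‖G z - G p‖ ≤ C * ‖z - p‖ := by
    filter_upwards [hGd.hasFDerivAt.isLittleO.def (sub_pos.2 hGp')] with z hz
    calc ‖G z - G p‖ = ‖G z - G p - fderiv ℂ G p (z - p) + fderiv ℂ G p (z - p)‖ := by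
          rw [sub_add_cancel]
      _ ≤ (C - ‖fderiv ℂ G p‖) * ‖z - p‖ + ‖fderiv ℂ G p‖ * ‖z - p‖ :=
        (norm_add_le _ _).trans (add_le_add hz ((fderiv ℂ G p).le_opNorm _))
      _ = C * ‖z - p‖ := by ring
  refine (hΦd.hasFDerivAt.sub (hasFDerivAt_id p)).le_of_lip' (by positivity) ?_
  filter_upwards [hlip, hGd.continuousAt.norm.eventually_le_const hGp,
    ball_mem_nhds p (half_pos hR)] with z hz hzC hzR
  calc ‖Φ s z - z - (Φ s p - p)‖ = ‖Φ s z - Φ s p - (z - p)‖ := by rw [sub_sub_sub_comm]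
    _ ≤ (8 * Δ / R ^ 2 * ‖z - p‖ * ‖G z‖ + Δ / R * ‖G z - G p‖) * s :=
      hΦ.norm_sub_sub_sub_le hD hG hΔ hpR hzR hs
    _ ≤ (8 * Δ / R ^ 2 * ‖z - p‖ * C + Δ / R * (C * ‖z - p‖)) * s := by gcongr
    _ = (8 * Δ / R ^ 2 + Δ / R) * C * s * ‖z - p‖ := by ring

-- While `‖DΦ_t(z) - id‖ ≤ 1/2`, the displacement `Φ_t(z) - z` is within `t ‖G z‖ / 2` of `t G(z)`,
-- and it never exceeds the diameter of `D`.
lemma norm_mul_le_of_norm_fderiv_sub_id_le (hΦ : IsSemiflow D G Φ) (hD : IsOpen D)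
    (hG : DifferentiableOn ℂ G D) (hΔ : ∀ x ∈ D, ∀ y ∈ D, dist x y ≤ Δ) (hz : z ∈ D) (hs : 0 ≤ s)
    (hΦz : ∀ t ∈ Icc 0 s, ‖fderiv ℂ (Φ t) z - .id ℂ F‖ ≤ 1 / 2) : ‖G z‖ * s ≤ 2 * Δ := by
  have hderiv : ∀ t ∈ Icc 0 s, HasDerivAt (fun t => Φ t z - t • G z)
      ((fderiv ℂ (Φ t) z - .id ℂ F) (G z)) t := fun t ht => by
    rw [sub_apply, ContinuousLinearMap.id_apply]
    simpa only [one_smul] using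
      (hΦ.hasDerivAt hD hG hz ht.1).fun_sub ((hasDerivAt_id' t).smul_const (G z))
  have hdisp : ‖Φ s z - s • G z - z‖ ≤ 1 / 2 * ‖G z‖ * s := by
    simpa only [hΦ.zero_apply z hz, zero_smul, sub_zero] using
      norm_image_sub_le_of_norm_deriv_le_segment' (fun t ht => (hderiv t ht).hasDerivWithinAt)
        (fun t ht => ContinuousLinearMap.le_of_opNorm_le _
          (hΦz t (Ico_subset_Icc_self ht)) (G z)) s ⟨hs, le_rfl⟩
  have hdiam : ‖Φ s z - z‖ ≤ Δ := dist_eq_norm (Φ s z) z ▸ hΔ _ (hΦ.mapsTo hs hz) _ hz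
  have htriangle : ‖s • G z‖ ≤ Δ + 1 / 2 * ‖G z‖ * s := by
    have hsplit : s • G z = Φ s z - z - (Φ s z - s • G z - z) := by abel
    exact hsplit ▸ (norm_sub_le _ _).trans (add_le_add hdiam hdisp)
  rw [norm_smul, Real.norm_of_nonneg hs] at htriangle
  linarith

lemma norm_le_of_mem_ball (hΦ : IsSemiflow D G Φ) (hD : IsOpen D) (hG : DifferentiableOn ℂ G D)
    (hΔ : ∀ x ∈ D, ∀ y ∈ D, dist x y ≤ Δ) (hR : 0 < R) (hRΔ : R ≤ Δ) (hpR : ball p R ⊆ D)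
    (hGp : ‖G p‖ < C) (hGp' : ‖fderiv ℂ G p‖ < C) (hz : z ∈ ball p (R ^ 2 / (32 * Δ))) :
    ‖G z‖ ≤ 8 * Δ * ((8 * Δ / R ^ 2 + Δ / R) * C) := by
  have hΔ₀ : 0 < Δ := hR.trans_le hRΔ
  have hC : 0 < C := (norm_nonneg _).trans_lt hGp
  have hzR : z ∈ ball p (R / 2) := ball_subset_ball (by
    rw [div_le_iff₀ (by positivity)]; nlinarith) hz
  have hzp : 8 * Δ / R ^ 2 * ‖z - p‖ ≤ 1 / 4 :=
    calc 8 * Δ / R ^ 2 * ‖z - p‖ ≤ 8 * Δ / R ^ 2 * (R ^ 2 / (32 * Δ)) := by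
          gcongr; exact (mem_ball_iff_norm.1 hz).le
      _ = 1 / 4 := by field_simp; norm_num
  set B := (8 * Δ / R ^ 2 + Δ / R) * C
  have hB : 0 < B := by positivity
  have hclose : ∀ t ∈ Icc 0 (1 / (4 * B)), ‖fderiv ℂ (Φ t) z - .id ℂ F‖ ≤ 1 / 2 := fun t ht =>
    calc ‖fderiv ℂ (Φ t) z - .id ℂ F‖
        ≤ ‖fderiv ℂ (Φ t) z - fderiv ℂ (Φ t) p‖ + ‖fderiv ℂ (Φ t) p - .id ℂ F‖ :=
          norm_sub_le_norm_sub_add_norm_sub _ _ _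
      _ ≤ 1 / 4 + B * (1 / (4 * B)) := add_le_add
          ((hΦ.norm_fderiv_sub_fderiv_le hD hG hΔ hpR hzR ht.1).trans hzp)
          ((hΦ.norm_fderiv_sub_id_le hD hG hΔ hR hpR hGp hGp' ht.1).trans
            (mul_le_mul_of_nonneg_left ht.2 hB.le))
      _ = 1 / 2 := by field_simp; norm_num
  have key := hΦ.norm_mul_le_of_norm_fderiv_sub_id_le hD hG hΔ
    (hpR (ball_subset_ball (by linarith) hzR)) (by positivity) hclose
  rw [mul_one_div, div_le_iff₀ (by positivity)] at key
  linarith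

end IsSemiflow

/-- `G` is a semicomplete holomorphic vector field on `D`: the initial value problem
`u' = G(u)`, `u(0) = z` has a solution in `D` for all nonnegative times, for each `z ∈ D`. -/
structure IsInfinitesimalGenerator (D : Set F) (G : F → F) : Prop where
  differentiableOn : DifferentiableOn ℂ G D
  exists_isTrajectory : ∀ z ∈ D, ∃ u : ℝ → F, u 0 = z ∧ IsTrajectory D G u

lemma IsInfinitesimalGenerator.exists_isSemiflow (hG : IsInfinitesimalGenerator D G) :
    ∃ Φ, IsSemiflow D G Φ := by
  choose! u hu₀ hu using hG.exists_isTrajectory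
  exact ⟨fun t z => u z t, hu₀, hu⟩

namespace IsInfinitesimalGenerator

variable [FiniteDimensional ℂ F]

lemma norm_le_of_mem_ball (hG : IsInfinitesimalGenerator D G) (hD : IsOpen D)
    (hΔ : ∀ x ∈ D, ∀ y ∈ D, dist x y ≤ Δ) (hR : 0 < R) (hRΔ : R ≤ Δ) (hpR : ball p R ⊆ D)
    (hGp : ‖G p‖ ≤ C) (hGp' : ‖fderiv ℂ G p‖ ≤ C) (hz : z ∈ ball p (R ^ 2 / (32 * Δ))) :
    ‖G z‖ ≤ 8 * Δ * ((8 * Δ / R ^ 2 + Δ / R) * (C + 1)) := by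
  obtain ⟨Φ, hΦ⟩ := hG.exists_isSemiflow
  exact hΦ.norm_le_of_mem_ball hD hG.differentiableOn hΔ hR hRΔ hpR
    (hGp.trans_lt (lt_add_one C)) (hGp'.trans_lt (lt_add_one C)) hz

variable {ι : Type*} {G : ι → F → F}

-- The radius in `norm_le_of_mem_ball` does not depend on the bounds at the centre of the ball, so
-- the ball around a point `a` close enough to `b` contains `b`.
lemma exists_eventually_norm_le_of_mem_closure (hG : ∀ k, IsInfinitesimalGenerator D (G k))
    (hD : IsOpen D) (hΔ₀ : 0 < Δ) (hΔ : ∀ x ∈ D, ∀ y ∈ D, dist x y ≤ Δ) {b : F} (hbD : b ∈ D)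
    (hb : b ∈ closure {a | ∃ M, ∀ᶠ x in 𝓝 a, ∀ k, ‖G k x‖ ≤ M}) :
    ∃ M, ∀ᶠ x in 𝓝 b, ∀ k, ‖G k x‖ ≤ M := by
  obtain ⟨R, hR, hRΔ, hRD⟩ : ∃ R > 0, R ≤ Δ ∧ ball b (2 * R) ⊆ D := by
    obtain ⟨R, hR, hRD⟩ := Metric.mem_nhds_iff.1 (hD.mem_nhds hbD)
    exact ⟨min (R / 2) Δ, by positivity, min_le_right _ _,
      (ball_subset_ball (by linarith [min_le_left (R / 2) Δ])).trans hRD⟩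
  obtain ⟨a, ⟨M, hM⟩, hba⟩ := Metric.mem_closure_iff.1 hb (min R (R ^ 2 / (32 * Δ)))
    (by positivity)
  obtain ⟨hbaR, hbaΔ⟩ := lt_min_iff.1 hba
  have haR : ball a R ⊆ D := (ball_subset_ball' (by linarith [dist_comm a b])).trans hRD
  obtain ⟨C, hC⟩ := exists_norm_fderiv_le_of_eventually_norm_le hD
    (fun k => (hG k).differentiableOn) (haR (mem_ball_self hR)) hM
  exact ⟨_, eventually_of_mem (isOpen_ball.mem_nhds (mem_ball.2 hbaΔ)) fun x hx k =>
    (hG k).norm_le_of_mem_ball hD hΔ hR hRΔ haR ((hM.self_of_nhds k).trans (le_max_left M C))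
      ((hC k).trans (le_max_right M C)) hx⟩

lemma exists_eventually_norm_le (hG : ∀ k, IsInfinitesimalGenerator D (G k)) (hD : IsOpen D)
    (hDb : Bornology.IsBounded D) (hDc : IsPreconnected D) (hp : p ∈ D) (hGp : ∀ k, ‖G k p‖ ≤ C)
    (hGp' : ∀ k, ‖fderiv ℂ (G k) p‖ ≤ C) {q : F} (hq : q ∈ D) :
    ∃ M, ∀ᶠ x in 𝓝 q, ∀ k, ‖G k x‖ ≤ M := by
  obtain ⟨Δ, hΔ₀, hΔ⟩ : ∃ Δ > 0, ∀ x ∈ D, ∀ y ∈ D, dist x y ≤ Δ := by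
    obtain ⟨Δ, hΔ⟩ := Metric.isBounded_iff.1 hDb
    exact ⟨max Δ 1, by positivity, fun x hx y hy => (hΔ hx hy).trans (le_max_left _ _)⟩
  let W : Set F := {a | ∃ M, ∀ᶠ x in 𝓝 a, ∀ k, ‖G k x‖ ≤ M}
  have hW : IsOpen W := isOpen_iff_mem_nhds.2 fun a ⟨M, hM⟩ =>
    hM.eventually_nhds.mono fun _ hx => ⟨M, hx⟩
  have hpW : p ∈ W := by
    obtain ⟨R, hR, hRD⟩ := Metric.mem_nhds_iff.1 (hD.mem_nhds hp)
    exact ⟨_, eventually_of_mem (ball_mem_nhds p (by positivity)) fun x hx k =>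
      (hG k).norm_le_of_mem_ball hD hΔ (lt_min hR hΔ₀) (min_le_right R Δ)
        ((ball_subset_ball (min_le_left R Δ)).trans hRD) (hGp k) (hGp' k) hx⟩
  exact hDc.subset_of_closure_inter_subset hW ⟨p, hp, hpW⟩
    (fun b hb => exists_eventually_norm_le_of_mem_closure hG hD hΔ₀ hΔ hb.2 hb.1) hq

end IsInfinitesimalGenerator

end Generator

section Convexity

lemma re_le_two_mul_re_of_re_nonneg {E : Type*} [NormedAddCommGroup E] [NormedSpace ℂ E]
    {f : E → ℂ} {p x : E} {R : ℝ} (hf : DifferentiableOn ℂ f (ball p R))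
    (hf₀ : ∀ y ∈ ball p R, 0 ≤ (f y).re) (hR : 0 < R) (hx : dist x p ≤ R / 5) :
    (f p).re ≤ 2 * (f x).re := by
  have hline : MapsTo (fun ζ : ℂ => p + ζ • (x - p)) (ball 0 5) (ball p R) := fun ζ hζ => by
    rw [mem_ball_iff_norm, add_sub_cancel_left, norm_smul, ← dist_eq_norm]
    calc ‖ζ‖ * dist x p ≤ ‖ζ‖ * (R / 5) := by gcongr
      _ < 5 * (R / 5) := by gcongr; exact mem_ball_zero_iff.1 hζ
      _ = R := by ring
  have h₁ : (1 : ℂ) ∈ ball (0 : ℂ) 5 := by rw [mem_ball_zero_iff, norm_one]; norm_num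
  have hfx : 0 ≤ (f x).re := by simpa using hf₀ _ (hline h₁)
  rcases (hf₀ p (mem_ball_self hR)).eq_or_lt with hfp | hfp
  · linarith
  have key := borelCaratheodory_zero (f := fun ζ : ℂ => f p - f (p + ζ • (x - p))) hfp
    ((hf.comp (by fun_prop) hline).const_sub (f p))
    (fun ζ hζ => by
      simpa only [mem_ofPred_eq, sub_re, sub_le_self_iff] using hf₀ _ (hline hζ)) (by norm_num) h₁
    (by simp only [zero_smul, add_zero, sub_self])
  rw [one_smul, add_sub_cancel, norm_one] at key
  have hre : (f p).re - (f x).re ≤ 2 * (f p).re * 1 / (5 - 1) :=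
    (re_le_norm (f p - f x)).trans key
  linarith

-- A point of `ball (f x) (c / 2)` outside `D` would be separated from `D` by a complex functional
-- `l`, and `l y - l ∘ f` would violate Harnack's inequality in the right half-plane.
lemma ball_half_subset_of_mapsTo {E F : Type*} [NormedAddCommGroup E] [NormedSpace ℂ E]
    [NormedAddCommGroup F] [NormedSpace ℂ F] {D : Set F} {f : E → F} {p x : E} {R c : ℝ}
    (hD : IsOpen D) (hDc : Convex ℝ D) (hf : DifferentiableOn ℂ f (ball p R))
    (hfD : MapsTo f (ball p R) D) (hc : ball (f p) c ⊆ D) (hR : 0 < R) (hx : dist x p ≤ R / 5) :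
    ball (f x) (c / 2) ⊆ D := by
  intro y hy
  by_contra hyD
  obtain ⟨l, hl⟩ := RCLike.geometric_hahn_banach_open_point (𝕜 := ℂ) hDc hD hyD
  have hharnack : (l y - l (f p)).re ≤ 2 * (l y - l (f x)).re :=
    re_le_two_mul_re_of_re_nonneg (f := fun ζ => l y - l (f ζ))
      ((l.differentiable.comp_differentiableOn hf).const_sub (l y))
      (fun ζ hζ => sub_nonneg.2 (hl _ (hfD hζ)).le) hR hx
  have hmem : f p + (2 : ℂ) • (y - f x) ∈ D := hc <| by
    rw [mem_ball_iff_norm, add_sub_cancel_left, norm_smul, Complex.norm_ofNat]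
    linarith [mem_ball_iff_norm.1 hy]
  have hlt := hl _ hmem
  simp only [map_add, map_smul, map_sub, smul_eq_mul, RCLike.re_eq_complex_re, sub_re,
    mul_re, re_ofNat, im_ofNat, zero_mul, sub_zero] at hlt hharnack
  linarith

namespace IsSemiflow

variable {F : Type*} [NormedAddCommGroup F] [NormedSpace ℂ F] [FiniteDimensional ℂ F]
  {D : Set F} {G : F → F} {Φ : ℝ → F → F} {z : F} {R Δ τ : ℝ}

lemma ball_div_two_pow_subset (hΦ : IsSemiflow D G Φ) (hD : IsOpen D) (hDc : Convex ℝ D)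
    (hG : DifferentiableOn ℂ G D) (hR : 0 < R) (hzR : ball z R ⊆ D)
    (hτ : ∀ s ∈ Icc 0 τ, dist (Φ s z) z ≤ R / 5) (j : ℕ) :
    ∀ t ∈ Icc 0 (j * τ), ball (Φ t z) (R / 2 ^ j) ⊆ D := by
  have hzD : z ∈ D := hzR (mem_ball_self hR)
  induction j with
  | zero =>
    rintro t ⟨ht₀, ht⟩
    obtain rfl : t = 0 := le_antisymm (by simpa using ht) ht₀
    simpa [hΦ.zero_apply z hzD] using hzR
  | succ j ih =>
    rintro t ⟨ht₀, ht⟩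
    push_cast at ht
    have hmax : 0 ≤ max (t - τ) 0 := le_max_right _ _
    have hτ₀ : t - max (t - τ) 0 ∈ Icc 0 τ := by
      have hτ_nonneg : 0 ≤ τ := by
        by_contra! hneg
        nlinarith [mul_nonneg_of_nonpos_of_nonpos (show -((j : ℝ) + 1) ≤ 0 by linarith) hneg.le]
      rcases le_total t τ with h | h
      · rw [max_eq_right (sub_nonpos.2 h), sub_zero]
        exact ⟨ht₀, h⟩
      · rw [max_eq_left (sub_nonneg.2 h), sub_sub_cancel]
        exact ⟨hτ_nonneg, le_rfl⟩
    have hball := ball_half_subset_of_mapsTo hD hDc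
      ((hΦ.differentiableOn hD hG hmax).mono hzR) ((hΦ.mapsTo hmax).mono_left hzR)
      (ih _ ⟨hmax, max_le (by linarith) (by nlinarith)⟩) hR (hτ _ hτ₀)
    rwa [← hΦ.add_apply (locallyLipschitzOn_of_differentiableOn hD hG) hzD hτ₀.1 hmax,
      add_sub_cancel, div_div, ← pow_succ] at hball

lemma dist_apply_self_le (hΦ : IsSemiflow D G Φ) (hD : IsOpen D) (hG : DifferentiableOn ℂ G D)
    (hΔ : ∀ x ∈ D, ∀ y ∈ D, dist x y ≤ Δ) (hR : 0 < R) (hzR : ball z R ⊆ D) {s : ℝ} (hs : 0 ≤ s) :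
    dist (Φ s z) z ≤ Δ / R * ‖G z‖ * s := by
  have hzD : z ∈ D := hzR (mem_ball_self hR)
  simpa only [hΦ.zero_apply z hzD, sub_zero, ← dist_eq_norm] using
    norm_image_sub_le_of_norm_deriv_le_segment'
      (fun t ht => (hΦ.hasDerivAt hD hG hzD ht.1).hasDerivWithinAt)
      (fun t ht => ContinuousLinearMap.le_of_opNorm_le _
        (hΦ.norm_fderiv_le hD hG hΔ hR hzR ht.1) (G z)) s ⟨hs, le_rfl⟩

lemma exists_isCompact_forall_mem {ι : Type*} {G : ι → F → F} {Φ : ι → ℝ → F → F} {M : ℝ}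
    (hD : IsOpen D) (hDb : Bornology.IsBounded D) (hDc : Convex ℝ D)
    (hΦ : ∀ k, IsSemiflow D (G k) (Φ k)) (hG : ∀ k, DifferentiableOn ℂ (G k) D) (hz : z ∈ D)
    (hM : ∀ k, ‖G k z‖ ≤ M) (T : ℝ) :
    ∃ K ⊆ D, IsCompact K ∧ ∀ k, ∀ t ∈ Icc 0 T, Φ k t z ∈ K := by
  have : ProperSpace F := FiniteDimensional.proper ℂ F
  obtain ⟨Δ, hΔ⟩ := Metric.isBounded_iff.1 hDb
  obtain ⟨R, hR, hzR⟩ := Metric.mem_nhds_iff.1 (hD.mem_nhds hz)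
  have hΔ₀ : 0 ≤ Δ := dist_nonneg.trans (hΔ hz hz)
  obtain ⟨τ, hτ, hτR⟩ : ∃ τ > 0, Δ / R * max M 0 * τ ≤ R / 5 := by
    obtain ⟨τ, hτ, h⟩ := exists_pos_mul_lt (div_pos hR (by norm_num : (0 : ℝ) < 5))
      (Δ / R * max M 0)
    exact ⟨τ, hτ, h.le⟩
  obtain ⟨j, hj⟩ := exists_nat_ge (T / τ)
  have hsub : (thickening (R / 2 ^ j) Dᶜ)ᶜ ⊆ D :=
    compl_subset_comm.1 (self_subset_thickening (by positivity) _)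
  refine ⟨_, hsub, isCompact_of_isClosed_isBounded isOpen_thickening.isClosed_compl
    (hDb.subset hsub), fun k t ht hmem => ?_⟩
  obtain ⟨y, hyD, hy⟩ := mem_thickening_iff.1 hmem
  refine hyD ((hΦ k).ball_div_two_pow_subset hD hDc (hG k) hR hzR (fun s hs => ?_) j t
    ⟨ht.1, ht.2.trans ((div_le_iff₀ hτ).1 hj)⟩ (mem_ball'.2 hy))
  calc dist (Φ k s z) z ≤ Δ / R * ‖G k z‖ * s :=
        (hΦ k).dist_apply_self_le hD (hG k) (fun x hx y hy => hΔ hx hy) hR hzR hs.1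
    _ ≤ Δ / R * max M 0 * τ := by
        gcongr
        · exact hs.1
        · exact (hM k).trans (le_max_left _ _)
        · exact hs.2
    _ ≤ R / 5 := hτR

end IsSemiflow

end Convexity

section Limit

variable {F : Type*} [NormedAddCommGroup F] [NormedSpace ℝ F] {D : Set F}

lemma IsTrajectory.dist_le_gronwallBound {G₁ G₂ g : F → F} {u v : ℝ → F} {K : Set F} {L : NNReal}
    {η₁ η₂ T : ℝ} (hu : IsTrajectory D G₁ u) (hv : IsTrajectory D G₂ v) (h₀ : u 0 = v 0)
    (huK : ∀ t ∈ Icc 0 T, u t ∈ K) (hvK : ∀ t ∈ Icc 0 T, v t ∈ K) (hg : LipschitzOnWith L g K)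
    (hη₁ : ∀ x ∈ K, dist (G₁ x) (g x) ≤ η₁) (hη₂ : ∀ x ∈ K, dist (G₂ x) (g x) ≤ η₂) {t : ℝ}
    (ht : t ∈ Icc 0 T) : dist (u t) (v t) ≤ gronwallBound 0 L (η₁ + η₂) t := by
  simpa only [sub_zero] using dist_le_of_approx_trajectories_ODE_of_mem (v := fun _ => g)
    (s := fun _ => K) (fun _ _ => hg)
    (hu.continuousOn.mono Icc_subset_Ici_self) (fun t ht => (hu.hasDerivAt ht.1).hasDerivWithinAt)
    (fun t ht => hη₁ _ (huK t (Ico_subset_Icc_self ht)))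
    (fun t ht => huK t (Ico_subset_Icc_self ht))
    (hv.continuousOn.mono Icc_subset_Ici_self) (fun t ht => (hv.hasDerivAt ht.1).hasDerivWithinAt)
    (fun t ht => hη₂ _ (hvK t (Ico_subset_Icc_self ht)))
    (fun t ht => hvK t (Ico_subset_Icc_self ht))
    (by rw [h₀, dist_self]) t ht

variable {G : ℕ → F → F} {g : F → F} {u : ℕ → ℝ → F} {z : F} {K : Set F} {T : ℝ}

lemma uniformCauchySeqOn_of_isTrajectory {L : NNReal} (hg : LipschitzOnWith L g K)
    (hGg : TendstoUniformlyOn G g atTop K) (hu : ∀ k, IsTrajectory D (G k) (u k))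
    (hu₀ : ∀ k, u k 0 = z) (huK : ∀ k, ∀ t ∈ Icc 0 T, u k t ∈ K) :
    UniformCauchySeqOn u atTop (Icc 0 T) := by
  refine Metric.uniformCauchySeqOn_iff.2 fun ε hε => ?_
  obtain ⟨η, hη, hηε⟩ : ∃ η > 0, gronwallBound 0 L (η + η) T < ε := by
    have hlim : Tendsto (fun η => gronwallBound 0 L (η + η) T) (𝓝 0) (𝓝 0) :=
      ((gronwallBound_continuous_ε 0 L T).comp (continuous_id.add continuous_id)).tendsto' 0 0 <| by
        simp only [Function.comp_apply, Pi.add_apply, id, add_zero, gronwallBound_ε0_δ0]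
    have hpos : ∀ᶠ η : ℝ in 𝓝[>] 0, 0 < η := self_mem_nhdsWithin
    exact (hpos.and
      ((hlim.mono_left nhdsWithin_le_nhds).eventually_lt_const hε)).exists
  obtain ⟨N, hN⟩ := eventually_atTop.1 (Metric.tendstoUniformlyOn_iff.1 hGg η hη)
  have hclose : ∀ k ≥ N, ∀ x ∈ K, dist (G k x) (g x) ≤ η := fun k hk x hx =>
    (dist_comm _ _).trans_le (hN k hk x hx).le
  exact ⟨N, fun m hm n hn t ht => lt_of_le_of_lt
    (((hu m).dist_le_gronwallBound (hu n) ((hu₀ m).trans (hu₀ n).symm) (huK m) (huK n) hg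
      (hclose m hm) (hclose n hn) ht).trans
      (gronwallBound_mono le_rfl (by positivity) L.coe_nonneg ht.2)) hηε⟩

lemma exists_forall_tendstoUniformlyOn_of_isTrajectory [CompleteSpace F]
    (hg : LocallyLipschitzOn D g)
    (hGg : ∀ K ⊆ D, IsCompact K → TendstoUniformlyOn G g atTop K)
    (hu : ∀ k, IsTrajectory D (G k) (u k)) (hu₀ : ∀ k, u k 0 = z)
    (huK : ∀ T, ∃ K ⊆ D, IsCompact K ∧ ∀ k, ∀ t ∈ Icc 0 T, u k t ∈ K) :
    ∃ U, ∀ T, TendstoUniformlyOn u U atTop (Icc 0 T) := by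
  have hcauchy : ∀ T, UniformCauchySeqOn u atTop (Icc 0 T) := fun T => by
    obtain ⟨K, hKD, hK, huK⟩ := huK T
    obtain ⟨L, hL⟩ := (hg.mono hKD).exists_lipschitzOnWith_of_compact hK
    exact uniformCauchySeqOn_of_isTrajectory hL (hGg K hKD hK) hu hu₀ huK
  have hlim : ∀ t ∈ Ici (0 : ℝ), ∃ y, Tendsto (fun k => u k t) atTop (𝓝 y) := fun t ht =>
    cauchySeq_tendsto_of_complete ((hcauchy t).cauchySeq ⟨ht, le_rfl⟩)
  choose! U hU using hlim
  exact ⟨U, fun T => (hcauchy T).tendstoUniformlyOn_of_tendsto fun t ht => hU t ht.1⟩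

lemma tendstoUniformlyOn_comp_of_uniformContinuousOn {ι X α β : Type*} [PseudoMetricSpace α]
    [PseudoMetricSpace β] {l : Filter ι} {f : ι → α → β} {g : α → β} {u : ι → X → α} {v : X → α}
    {K : Set α} {s : Set X} (hf : TendstoUniformlyOn f g l K) (hg : UniformContinuousOn g K)
    (hu : TendstoUniformlyOn u v l s) (huK : ∀ k, MapsTo (u k) s K) (hvK : MapsTo v s K) :
    TendstoUniformlyOn (fun k => f k ∘ u k) (g ∘ v) l s := by
  refine Metric.tendstoUniformlyOn_iff.2 fun ε hε => ?_
  obtain ⟨δ, hδ, hgδ⟩ := Metric.uniformContinuousOn_iff.1 hg (ε / 2) (half_pos hε)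
  filter_upwards [Metric.tendstoUniformlyOn_iff.1 hf (ε / 2) (half_pos hε),
    Metric.tendstoUniformlyOn_iff.1 hu δ hδ] with k hfk huk x hx
  calc dist (g (v x)) (f k (u k x))
      ≤ dist (g (v x)) (g (u k x)) + dist (g (u k x)) (f k (u k x)) := dist_triangle _ _ _
    _ < ε / 2 + ε / 2 := add_lt_add (hgδ _ (hvK hx) _ (huK k hx) (huk x hx)) (hfk _ (huK k hx))
    _ = ε := add_halves ε

lemma tendsto_of_tendstoUniformlyOn_deriv {ι : Type*} {l : Filter ι} {f f' : ι → ℝ → F}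
    {g g' : ℝ → F} (hT : 0 ≤ T) (hf : ∀ k, ∀ t ∈ Icc 0 T, HasDerivAt (f k) (f' k t) t)
    (hg : ∀ t ∈ Icc 0 T, HasDerivAt g (g' t) t) (h₀ : ∀ k, f k 0 = g 0)
    (hf' : TendstoUniformlyOn f' g' l (Icc 0 T)) : Tendsto (fun k => f k T) l (𝓝 (g T)) := by
  refine Metric.tendsto_nhds.2 fun ε hε => ?_
  filter_upwards [Metric.tendstoUniformlyOn_iff.1 hf' (ε / (T + 1)) (by positivity)] with k hk
  have hbound : ∀ t ∈ Ico 0 T, ‖f' k t - g' t‖ ≤ ε / (T + 1) := fun t ht => by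
    rw [← dist_eq_norm, dist_comm]
    exact (hk t (Ico_subset_Icc_self ht)).le
  have h := norm_image_sub_le_of_norm_deriv_le_segment' (f := fun t => f k t - g t)
    (fun t ht => ((hf k t ht).sub (hg t ht)).hasDerivWithinAt) hbound T ⟨hT, le_rfl⟩
  simp only [h₀, sub_self, sub_zero] at h
  calc dist (f k T) (g T) ≤ ε / (T + 1) * T := dist_eq_norm (f k T) (g T) ▸ h
    _ < ε := by
      rw [div_mul_eq_mul_div, div_lt_iff₀ (by positivity)]
      linarith

lemma exists_isTrajectory_of_tendstoUniformlyOn [CompleteSpace F] (hg : LocallyLipschitzOn D g)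
    (hGg : ∀ K ⊆ D, IsCompact K → TendstoUniformlyOn G g atTop K)
    (hu : ∀ k, IsTrajectory D (G k) (u k)) (hu₀ : ∀ k, u k 0 = z)
    (huK : ∀ T, ∃ K ⊆ D, IsCompact K ∧ ∀ k, ∀ t ∈ Icc 0 T, u k t ∈ K) :
    ∃ v, v 0 = z ∧ IsTrajectory D g v := by
  obtain ⟨U, hU⟩ := exists_forall_tendstoUniformlyOn_of_isTrajectory hg hGg hu hu₀ huK
  have hUK : ∀ {K : Set F} {T : ℝ}, IsCompact K → (∀ k, ∀ t ∈ Icc 0 T, u k t ∈ K) →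
      MapsTo U (Icc 0 T) K := fun hK huK t ht =>
    hK.isClosed.mem_of_tendsto ((hU _).tendsto_at ht) (.of_forall fun k => huK k t ht)
  have hUD : MapsTo U (Ici 0) D := fun t ht => by
    obtain ⟨K, hKD, hK, huK⟩ := huK t
    exact hKD (hUK hK huK ⟨ht, le_rfl⟩)
  have hUc : ContinuousOn U (Ici 0) := fun t ht => by
    have hcont : ContinuousOn U (Icc 0 (t + 1)) := (hU (t + 1)).continuousOn
      (.of_forall fun k => (hu k).continuousOn.mono Icc_subset_Ici_self)
    exact (hcont t ⟨ht, by linarith⟩).mono_of_mem_nhdsWithin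
      (mem_nhdsWithin.2 ⟨Iio (t + 1), isOpen_Iio, by simp, fun s hs => ⟨hs.2, le_of_lt hs.1⟩⟩)
  -- Freezing the integrand at negative times makes the derivative at `0` two-sided.
  let v : ℝ → F := fun t => z + ∫ s in 0..t, g (U (max s 0))
  have hv : ∀ t, HasDerivAt v (g (U (max t 0))) t := fun t =>
    ((hg.continuousOn.comp_continuous (hUc.comp_continuous (by fun_prop) fun s => le_max_right s 0)
      fun s => hUD (le_max_right s 0)).integral_hasStrictDerivAt 0 t).hasDerivAt.const_add z
  have hv₀ : v 0 = z := by simp only [v, intervalIntegral.integral_same, add_zero]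
  have hv' : ∀ t, 0 ≤ t → HasDerivAt v (g (U t)) t := fun t ht => by
    simpa only [max_eq_left ht] using hv t
  have hvU : ∀ t, 0 ≤ t → v t = U t := fun t ht => by
    obtain ⟨K, hKD, hK, huK⟩ := huK t
    refine tendsto_nhds_unique (tendsto_of_tendstoUniformlyOn_deriv ht
      (fun k s hs => (hu k).hasDerivAt hs.1) (fun s hs => hv' s hs.1)
      (fun k => (hu₀ k).trans hv₀.symm) ?_) ((hU t).tendsto_at ⟨ht, le_rfl⟩)
    exact tendstoUniformlyOn_comp_of_uniformContinuousOn (hGg K hKD hK)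
      (hK.uniformContinuousOn_of_continuous (hg.continuousOn.mono hKD)) (hU t) huK (hUK hK huK)
  exact ⟨v, hv₀, fun t ht => ⟨hvU t ht ▸ hUD ht, hvU t ht ▸ hv' t ht⟩⟩

end Limit

section Main

variable {F : Type*} [NormedAddCommGroup F] [NormedSpace ℂ F] [FiniteDimensional ℂ F] {D : Set F}
  {G : ℕ → F → F} {g : F → F}

lemma IsInfinitesimalGenerator.of_tendstoLocallyUniformlyOn (hD : IsOpen D)
    (hDb : Bornology.IsBounded D) (hDc : Convex ℝ D)
    (hG : ∀ k, IsInfinitesimalGenerator D (G k)) (hGg : TendstoLocallyUniformlyOn G g atTop D) :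
    IsInfinitesimalGenerator D g := by
  have : ProperSpace F := FiniteDimensional.proper ℂ F
  have hg : DifferentiableOn ℂ g D :=
    differentiableOn_of_tendstoLocallyUniformlyOn hD (fun k => (hG k).differentiableOn) hGg
  refine ⟨hg, fun z hz => ?_⟩
  choose Φ hΦ using fun k => (hG k).exists_isSemiflow
  obtain ⟨M, hM⟩ := (Metric.isBounded_range_of_tendsto _ (hGg.tendsto_at hz)).exists_norm_le
  exact exists_isTrajectory_of_tendstoUniformlyOn (locallyLipschitzOn_of_differentiableOn hD hg)
    ((tendstoLocallyUniformlyOn_iff_forall_isCompact hD).1 hGg)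
    (fun k => (hΦ k).isTrajectory z hz) (fun k => (hΦ k).zero_apply z hz)
    (IsSemiflow.exists_isCompact_forall_mem hD hDb hDc hΦ (fun k => (hG k).differentiableOn) hz
      fun k => hM _ (mem_range_self k))

theorem stmt12_general (hD : IsOpen D) (hDb : Bornology.IsBounded D) (hDc : Convex ℝ D) {p : F}
    (hp : p ∈ D) (hG : ∀ k, IsInfinitesimalGenerator D (G k)) {C : ℝ}
    (hC : ∀ k, ‖G k p‖ + ‖fderiv ℂ (G k) p‖ ≤ C) :
    ∃ φ : ℕ → ℕ, StrictMono φ ∧ ∃ g : F → F, IsInfinitesimalGenerator D g ∧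
      TendstoLocallyUniformlyOn (fun k => G (φ k)) g atTop D := by
  have : ProperSpace F := FiniteDimensional.proper ℂ F
  have hbdd : ∀ q ∈ D, ∃ M, ∀ᶠ x in 𝓝 q, ∀ k, ‖G k x‖ ≤ M := fun q hq =>
    IsInfinitesimalGenerator.exists_eventually_norm_le hG hD hDb hDc.isPreconnected hp
      (fun k => (le_add_of_nonneg_right (norm_nonneg _)).trans (hC k))
      (fun k => (le_add_of_nonneg_left (norm_nonneg _)).trans (hC k)) hq
  obtain ⟨φ, hφ, g, hg⟩ :=
    exists_subseq_tendstoLocallyUniformlyOn hD (fun k => (hG k).differentiableOn) hbdd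
  exact ⟨φ, hφ, g, .of_tendstoLocallyUniformlyOn hD hDb hDc (fun k => hG (φ k)) hg, hg⟩

end Main

theorem stmt12 {n : ℕ} (D : Set (EuclideanSpace ℂ (Fin n)))
    (hDo : IsOpen D) (hDb : Bornology.IsBounded D) (hDc : Convex ℝ D)
    (hDbal : ∀ c : ℂ, ‖c‖ ≤ 1 → ∀ z ∈ D, c • z ∈ D)
    (h0 : (0 : EuclideanSpace ℂ (Fin n)) ∈ D)
    (G : ℕ → EuclideanSpace ℂ (Fin n) → EuclideanSpace ℂ (Fin n))
    (hGd : ∀ k, DifferentiableOn ℂ (G k) D)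
    (hGgen : ∀ k, ∀ z0 ∈ D, ∃ u : ℝ → EuclideanSpace ℂ (Fin n), u 0 = z0 ∧
      ∀ t : ℝ, 0 ≤ t → u t ∈ D ∧ HasDerivAt u (G k (u t)) t)
    (C : ℝ) (hC : 0 < C)
    (hbound : ∀ k, ‖G k 0‖ + ‖fderiv ℂ (G k) 0‖ ≤ C) :
    ∃ φ : ℕ → ℕ, StrictMono φ ∧
      ∃ g : EuclideanSpace ℂ (Fin n) → EuclideanSpace ℂ (Fin n),
        DifferentiableOn ℂ g D ∧
        TendstoLocallyUniformlyOn (fun k => G (φ k)) g Filter.atTop D ∧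
        ∀ z0 ∈ D, ∃ u : ℝ → EuclideanSpace ℂ (Fin n), u 0 = z0 ∧
          ∀ t : ℝ, 0 ≤ t → u t ∈ D ∧ HasDerivAt u (g (u t)) t := by
  obtain ⟨φ, hφ, g, hg, hlim⟩ :=
    stmt12_general hDo hDb hDc h0 (fun k => ⟨hGd k, hGgen k⟩) hbound
  exact ⟨φ, hφ, g, hg.differentiableOn, hlim, hg.exists_isTrajectory⟩
end
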